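/- arXiv:1502.04354 — 6 statements merged into one kernel-verified Lean document; each statement's English description precedes it below -/
import Mathlib

section
/- There exists an absolute constant c > 0 such that for every ε with 0 < ε < 1/4, every δ with 0 < δ < 1/3, every natural number ℓ, and every function f : {0,1}^ℓ → {0,1}, if under ℓ i.i.d. Bernoulli(1/2 + ε) samples f outputs 1 with probability at least 1 − δ, and under ℓ i.i.d. Bernoulli(1/2 − ε) samples f outputs 0 with probability at least 1 − δ, then ℓ ≥ (c/ε²)·ln(1/δ). Consequently, any algorithm solving the (ε, δ)-winner determination problem for the plurality voting rule requires Ω((1/ε²)·log(1/δ)) sampled votes. -/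
/-!
This is Le Cam's two-point method. A test that errs with average probability at most `δ` forces the
two sampling laws `p`, `q` to be far apart in total variation, and Cauchy–Schwarz applied to
`p - q = (√p - √q) (√p + √q)` turns this into an upper bound `4 δ (1 - δ)` for the square of their
affinity `∑ √(p q)`. The affinity is multiplicative over independent samples, and a single vote has
squared affinity `1 - 4 ε ^ 2`. Hence `(1 - 4 ε ^ 2) ^ ℓ ≤ 4 δ (1 - δ)`, and it remains to take
logarithms: the left side is `exp (-O(ℓ ε ^ 2))` when `ε` is bounded away from `1 / 2`, and the
right side is at most a power of `δ` when `δ` is.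
-/

open Finset Real

section Affinity

variable {α : Type*} [Fintype α] {p q φ : α → ℝ} {δ : ℝ}

/-- The Bhattacharyya coefficient (Hellinger affinity) `∑ √(p q)` of two weight functions on a
finite type, the measure of closeness of two laws that is multiplicative on products. -/
noncomputable def bhattacharyyaCoeff (p q : α → ℝ) : ℝ := ∑ a, √(p a * q a)

lemma sum_sqrt_sub_sqrt_sq (hp : p ∈ stdSimplex ℝ α) (hq : q ∈ stdSimplex ℝ α) :
    ∑ a, (√(p a) - √(q a)) ^ 2 = 2 * (1 - bhattacharyyaCoeff p q) := by
  calc ∑ a, (√(p a) - √(q a)) ^ 2 = ∑ a, (p a + q a - 2 * √(p a * q a)) := by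
        refine sum_congr rfl fun a _ ↦ ?_
        rw [sub_sq, sq_sqrt (hp.1 a), sq_sqrt (hq.1 a), sqrt_mul (hp.1 a)]
        ring
    _ = 2 * (1 - bhattacharyyaCoeff p q) := by
        rw [sum_sub_distrib, sum_add_distrib, hp.2, hq.2, ← mul_sum, bhattacharyyaCoeff]
        ring

lemma sum_sqrt_add_sqrt_sq (hp : p ∈ stdSimplex ℝ α) (hq : q ∈ stdSimplex ℝ α) :
    ∑ a, (√(p a) + √(q a)) ^ 2 = 2 * (1 + bhattacharyyaCoeff p q) := by
  calc ∑ a, (√(p a) + √(q a)) ^ 2 = ∑ a, (p a + q a + 2 * √(p a * q a)) := by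
        refine sum_congr rfl fun a _ ↦ ?_
        rw [add_sq, sq_sqrt (hp.1 a), sq_sqrt (hq.1 a), sqrt_mul (hp.1 a)]
        ring
    _ = 2 * (1 + bhattacharyyaCoeff p q) := by
        rw [sum_add_distrib, sum_add_distrib, hp.2, hq.2, ← mul_sum, bhattacharyyaCoeff]
        ring

lemma sum_abs_sub_sq_le_bhattacharyyaCoeff (hp : p ∈ stdSimplex ℝ α) (hq : q ∈ stdSimplex ℝ α) :
    (∑ a, |p a - q a|) ^ 2 ≤ 4 * (1 - bhattacharyyaCoeff p q ^ 2) := by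
  have factor (a : α) : |p a - q a| = |√(p a) - √(q a)| * (√(p a) + √(q a)) := by
    rw [← abs_of_nonneg (add_nonneg (sqrt_nonneg (p a)) (sqrt_nonneg (q a))), ← abs_mul, mul_comm,
      ← sq_sub_sq, sq_sqrt (hp.1 a), sq_sqrt (hq.1 a)]
  calc (∑ a, |p a - q a|) ^ 2 = (∑ a, |√(p a) - √(q a)| * (√(p a) + √(q a))) ^ 2 := by
        simp only [factor]
    _ ≤ (∑ a, |√(p a) - √(q a)| ^ 2) * ∑ a, (√(p a) + √(q a)) ^ 2 :=
        sum_mul_sq_le_sq_mul_sq _ _ _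
    _ = 4 * (1 - bhattacharyyaCoeff p q ^ 2) := by
        simp only [sq_abs, sum_sqrt_sub_sqrt_sq hp hq, sum_sqrt_add_sqrt_sq hp hq]
        ring

lemma two_mul_sum_mul_sub_le_sum_abs_sub (hpq : ∑ a, p a = ∑ a, q a)
    (hφ : ∀ a, φ a ∈ Set.Icc 0 1) :
    2 * ∑ a, φ a * (p a - q a) ≤ ∑ a, |p a - q a| := by
  -- As `p - q` has total mass zero, `φ` may be recentred to `2 φ - 1`, which is bounded by `1`.
  calc 2 * ∑ a, φ a * (p a - q a) = ∑ a, (2 * φ a - 1) * (p a - q a) := by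
        simp only [sub_mul, one_mul, mul_assoc, sum_sub_distrib, ← mul_sum, hpq, sub_self, sub_zero]
    _ ≤ ∑ a, |p a - q a| := by
        refine sum_le_sum fun a _ ↦ (le_abs_self _).trans ?_
        rw [abs_mul]
        refine mul_le_of_le_one_left (abs_nonneg _) (abs_le.2 ⟨?_, ?_⟩) <;>
          linarith [(hφ a).1, (hφ a).2]

theorem bhattacharyyaCoeff_sq_le_of_average_success (hp : p ∈ stdSimplex ℝ α)
    (hq : q ∈ stdSimplex ℝ α) (hφ : ∀ a, φ a ∈ Set.Icc 0 1) (hδ : δ ≤ 1 / 2)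
    (hsuccess : 1 - δ ≤ (∑ a, φ a * p a + ∑ a, (1 - φ a) * q a) / 2) :
    bhattacharyyaCoeff p q ^ 2 ≤ 4 * δ * (1 - δ) := by
  have hadvantage : 1 - 2 * δ ≤ ∑ a, φ a * (p a - q a) := by
    simp only [sub_mul, mul_sub, one_mul, sum_sub_distrib, hq.2] at hsuccess ⊢
    linarith
  have hdist : 2 * (1 - 2 * δ) ≤ ∑ a, |p a - q a| :=
    (mul_le_mul_of_nonneg_left hadvantage zero_le_two).trans
      (two_mul_sum_mul_sub_le_sum_abs_sub (hp.2.trans hq.2.symm) hφ)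
  have hsq : (2 * (1 - 2 * δ)) ^ 2 ≤ 4 * (1 - bhattacharyyaCoeff p q ^ 2) :=
    (pow_le_pow_left₀ (by linarith) hdist 2).trans (sum_abs_sub_sq_le_bhattacharyyaCoeff hp hq)
  linarith

end Affinity

section Product

variable {ι : Type*} [Fintype ι] [DecidableEq ι] {κ : ι → Type*} [∀ i, Fintype (κ i)]
  {p q : ∀ i, κ i → ℝ}

lemma prod_mem_stdSimplex (hp : ∀ i, p i ∈ stdSimplex ℝ (κ i)) :
    (fun ω : ∀ i, κ i ↦ ∏ i, p i (ω i)) ∈ stdSimplex ℝ (∀ i, κ i) := by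
  refine ⟨fun ω ↦ prod_nonneg fun i _ ↦ (hp i).1 (ω i), ?_⟩
  rw [← Fintype.prod_sum, prod_congr rfl fun i _ ↦ (hp i).2, prod_const_one]

lemma bhattacharyyaCoeff_prod (hp : ∀ i a, 0 ≤ p i a) (hq : ∀ i a, 0 ≤ q i a) :
    bhattacharyyaCoeff (fun ω : ∀ i, κ i ↦ ∏ i, p i (ω i)) (fun ω ↦ ∏ i, q i (ω i)) =
      ∏ i, bhattacharyyaCoeff (p i) (q i) := by
  simp only [bhattacharyyaCoeff, Fintype.prod_sum, ← prod_mul_distrib]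
  exact sum_congr rfl fun ω _ ↦ sqrt_prod _ fun i _ ↦ mul_nonneg (hp i _) (hq i _)

end Product

section BiasedVote

variable {ε : ℝ}

/-- The weights of the Bernoulli law with success probability `1 / 2 + ε`, written in terms of the
bias `ε` so that the two laws to be distinguished are `biasedVote ε` and `biasedVote (-ε)`. -/
noncomputable def biasedVote (ε : ℝ) (b : Bool) : ℝ := if b = true then 1 / 2 + ε else 1 / 2 - ε

lemma biasedVote_mem_stdSimplex (hε : |ε| ≤ 1 / 2) : biasedVote ε ∈ stdSimplex ℝ Bool := by
  obtain ⟨hlower, hupper⟩ := abs_le.1 hε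
  refine ⟨Bool.forall_bool.2 ⟨?_, ?_⟩, ?_⟩
  · simpa [biasedVote] using hupper
  · simp only [biasedVote, if_true]
    linarith
  · simp only [Fintype.sum_bool, biasedVote, if_true, Bool.false_eq_true, if_false]
    ring

lemma bhattacharyyaCoeff_biasedVote_neg_sq (hε : |ε| ≤ 1 / 2) :
    bhattacharyyaCoeff (biasedVote ε) (biasedVote (-ε)) ^ 2 = 1 - 4 * ε ^ 2 := by
  have hmul (b : Bool) : biasedVote ε b * biasedVote (-ε) b = 1 / 4 - ε ^ 2 := by
    cases b <;> simp only [biasedVote, if_true, Bool.false_eq_true, if_false] <;> ring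
  have hnonneg : 0 ≤ 1 / 4 - ε ^ 2 := by
    linarith [sq_le_sq.2 (hε.trans (le_abs_self _))]
  simp only [bhattacharyyaCoeff, hmul, Fintype.sum_bool, ← two_mul, mul_pow, sq_sqrt hnonneg]
  ring

theorem one_sub_four_mul_sq_pow_card_le {ι : Type*} [Fintype ι] [DecidableEq ι] {δ : ℝ}
    (hε : |ε| ≤ 1 / 2) (hδ : δ ≤ 1 / 2) {φ : (ι → Bool) → ℝ} (hφ : ∀ ω, φ ω ∈ Set.Icc 0 1)
    (hsuccess : 1 - δ ≤ (∑ ω, φ ω * ∏ i, biasedVote ε (ω i) +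
      ∑ ω, (1 - φ ω) * ∏ i, biasedVote (-ε) (ω i)) / 2) :
    (1 - 4 * ε ^ 2) ^ Fintype.card ι ≤ 4 * δ * (1 - δ) := by
  have hp : biasedVote ε ∈ stdSimplex ℝ Bool := biasedVote_mem_stdSimplex hε
  have hq : biasedVote (-ε) ∈ stdSimplex ℝ Bool := biasedVote_mem_stdSimplex (by rwa [abs_neg])
  have htest := bhattacharyyaCoeff_sq_le_of_average_success
    (prod_mem_stdSimplex fun _ : ι ↦ hp) (prod_mem_stdSimplex fun _ ↦ hq) hφ hδ hsuccess
  rwa [bhattacharyyaCoeff_prod (fun _ ↦ hp.1) (fun _ ↦ hq.1), prod_const, card_univ, ← pow_mul,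
    mul_comm, pow_mul, bhattacharyyaCoeff_biasedVote_neg_sq hε] at htest

end BiasedVote

lemma exists_forall_four_mul_mul_one_sub_pow_le {δ₀ : ℝ} (hδ₀ : δ₀ < 1 / 2) :
    ∃ n : ℕ, 0 < n ∧ ∀ δ, 0 ≤ δ → δ ≤ δ₀ → (4 * δ * (1 - δ)) ^ n ≤ δ := by
  have hlt : 4 * δ₀ * (1 - δ₀) < 1 := by linarith [sq_pos_of_pos (show 0 < 1 - 2 * δ₀ by linarith)]
  obtain ⟨n, hn⟩ := exists_pow_lt_of_lt_one (show (0 : ℝ) < 1 / 4 by norm_num) hlt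
  refine ⟨n + 1, n.succ_pos, fun δ hδ hle ↦ ?_⟩
  have hnonneg : 0 ≤ 4 * δ * (1 - δ) := mul_nonneg (by linarith) (by linarith)
  have hmono : 4 * δ * (1 - δ) ≤ 4 * δ₀ * (1 - δ₀) := by
    linarith [mul_nonneg (sub_nonneg.2 hle) (show 0 ≤ 1 - δ - δ₀ by linarith)]
  calc (4 * δ * (1 - δ)) ^ (n + 1) = (4 * δ * (1 - δ)) ^ n * (4 * δ * (1 - δ)) := pow_succ _ _
    _ ≤ 1 / 4 * (4 * δ) :=
        mul_le_mul ((pow_le_pow_left₀ hnonneg hmono n).trans hn.le)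
          (mul_le_of_le_one_right (by linarith) (by linarith)) hnonneg (by norm_num)
    _ = δ := by ring

lemma neg_div_le_log_one_sub {t m : ℝ} (ht : 0 ≤ t) (hm : 0 < m) (hle : m ≤ 1 - t) :
    -(t / m) ≤ log (1 - t) := by
  have hpos : 0 < 1 - t := hm.trans_le hle
  calc -(t / m) ≤ -(t / (1 - t)) := by gcongr
    _ = 1 - (1 - t)⁻¹ := by field_simp; ring
    _ ≤ log (1 - t) := one_sub_inv_le_log_of_pos hpos

lemma exists_forall_div_sq_mul_log_le_of_pow_le {ε₀ δ₀ : ℝ} (hε₀ : ε₀ < 1 / 2)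
    (hδ₀ : δ₀ < 1 / 2) :
    ∃ c : ℝ, 0 < c ∧ ∀ (ε δ : ℝ) (k : ℕ), ε ≠ 0 → |ε| ≤ ε₀ → 0 < δ → δ ≤ δ₀ →
      (1 - 4 * ε ^ 2) ^ k ≤ 4 * δ * (1 - δ) → c / ε ^ 2 * log (1 / δ) ≤ k := by
  obtain ⟨n, hn, hpow⟩ := exists_forall_four_mul_mul_one_sub_pow_le hδ₀
  have hm : 0 < 1 - 2 * ε₀ := by linarith
  refine ⟨(1 - 2 * ε₀) / (4 * n), by positivity, fun ε δ k hε hεle hδ hδle hk ↦ ?_⟩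
  have hgap : 1 - 2 * ε₀ ≤ 1 - 4 * ε ^ 2 := by
    rw [← sq_abs]
    linarith [mul_nonneg (abs_nonneg ε) (show 0 ≤ 1 - 2 * |ε| by linarith)]
  have hbase : 0 < 1 - 4 * ε ^ 2 := hm.trans_le hgap
  have hpow_le : ((1 - 4 * ε ^ 2) ^ k) ^ n ≤ δ :=
    (pow_le_pow_left₀ (by positivity) hk n).trans (hpow δ hδ.le hδle)
  have hlog : log (1 / δ) ≤ n * (k * (4 * ε ^ 2 / (1 - 2 * ε₀))) := by
    calc log (1 / δ) = -log δ := by rw [one_div, log_inv]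
      _ ≤ -log (((1 - 4 * ε ^ 2) ^ k) ^ n) := by gcongr
      _ = n * (k * -log (1 - 4 * ε ^ 2)) := by rw [log_pow, log_pow]; ring
      _ ≤ n * (k * (4 * ε ^ 2 / (1 - 2 * ε₀))) := by
          gcongr
          exact neg_le.1 (neg_div_le_log_one_sub (by positivity) hm hgap)
  calc (1 - 2 * ε₀) / (4 * n) / ε ^ 2 * log (1 / δ)
      ≤ (1 - 2 * ε₀) / (4 * n) / ε ^ 2 * (n * (k * (4 * ε ^ 2 / (1 - 2 * ε₀)))) := by gcongr
    _ = (k : ℝ) := by field_simp [hm.ne']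

lemma one_sub_ite_eq_true_mul {R : Type*} [NonAssocRing R] (b : Bool) (x : R) :
    (1 - if b = true then 1 else 0) * x = if b = false then x else 0 := by
  cases b <;> simp

theorem bernoulli_distinguishing_lower_bound_general {ε₀ δ₀ : ℝ} (hε₀ : ε₀ < 1 / 2)
    (hδ₀ : δ₀ < 1 / 2) :
    ∃ c : ℝ, 0 < c ∧
      ∀ ε δ : ℝ, ε ≠ 0 → |ε| ≤ ε₀ → 0 < δ → δ ≤ δ₀ →
      ∀ (ι : Type*) [Fintype ι] [DecidableEq ι] (φ : (ι → Bool) → ℝ),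
        (∀ ω, φ ω ∈ Set.Icc 0 1) →
        1 - δ ≤ (∑ ω, φ ω * ∏ i, biasedVote ε (ω i) +
          ∑ ω, (1 - φ ω) * ∏ i, biasedVote (-ε) (ω i)) / 2 →
        c / ε ^ 2 * log (1 / δ) ≤ Fintype.card ι := by
  obtain ⟨c, hc, hbound⟩ := exists_forall_div_sq_mul_log_le_of_pow_le hε₀ hδ₀
  exact ⟨c, hc, fun ε δ hε hεle hδ hδle ι _ _ φ hφ hsuccess ↦ hbound ε δ _ hε hεle hδ hδle
    (one_sub_four_mul_sq_pow_card_le (hεle.trans hε₀.le) (hδle.trans hδ₀.le) hφ hsuccess)⟩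

/-- Distinguishing Bernoulli(1/2+ε) from Bernoulli(1/2-ε) with error probability δ
requires ℓ ≥ (c/ε²)·ln(1/δ) samples; consequently, the (ε,δ)-winner determination
problem for the plurality rule requires Ω((1/ε²)·log(1/δ)) sampled votes. -/
theorem bernoulli_distinguishing_lower_bound :
    ∃ c : ℝ, 0 < c ∧
      ∀ (ε δ : ℝ), 0 < ε → ε < 1 / 4 → 0 < δ → δ < 1 / 3 →
      ∀ (ℓ : ℕ) (f : (Fin ℓ → Bool) → Bool),
        1 - δ ≤ (∑ ω : Fin ℓ → Bool,
          if f ω = true then (∏ i : Fin ℓ, if ω i = true then 1 / 2 + ε else 1 / 2 - ε)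
          else (0 : ℝ)) →
        1 - δ ≤ (∑ ω : Fin ℓ → Bool,
          if f ω = false then (∏ i : Fin ℓ, if ω i = true then 1 / 2 - ε else 1 / 2 + ε)
          else (0 : ℝ)) →
        c / ε ^ 2 * Real.log (1 / δ) ≤ (ℓ : ℝ) := by
  obtain ⟨c, hc, hbound⟩ := bernoulli_distinguishing_lower_bound_general
    (show (1 / 4 : ℝ) < 1 / 2 by norm_num) (show (1 / 3 : ℝ) < 1 / 2 by norm_num)
  refine ⟨c, hc, fun ε δ hε hε' hδ hδ' ℓ f hp hq ↦ ?_⟩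
  have hsamples := hbound ε δ hε.ne' ((abs_of_pos hε).trans_le hε'.le) hδ hδ'.le (Fin ℓ)
    (fun ω ↦ if f ω = true then 1 else 0) (fun ω ↦ by split_ifs <;> simp)
  simp only [one_sub_ite_eq_true_mul, ite_mul, one_mul, zero_mul, biasedVote, sub_neg_eq_add,
    ← sub_eq_add_neg, Fintype.card_fin] at hsamples
  exact hsamples (by linarith)
end

section
/- For every real ε with 0 < ε < 1 and all reals k, M with 0 < k < M, the following inequality holds: (ε + (1 − ε)·(k/M))·ln((1 − ε) + ε·(M/k)) + (1 − ε)·(1 − k/M)·ln(1 − ε) ≤ ε²·(M/k − 1). -/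
/-!
Writing `p = k / M`, the left-hand side is the divergence of the mixture `(1 - ε) • q + ε • δ₀` from
the two-point distribution `q = (p, 1 - p)`: only whether a vote contains `c_i` matters, and under
the uniform distribution this has probability `p`. The inequality `log x ≤ x - 1` bounds a
Kullback–Leibler divergence by the corresponding `χ²`-divergence, which is quadratic in the
mixture weight `ε` and equals `1 / p - 1` for the point mass `δ₀`.
-/

section DiscreteDivergence

variable {ι : Type*} [Fintype ι]

/-- The Kullback–Leibler divergence, in nats, of two weight vectors on a finite type. It is
real-valued, so it has this meaning only if `p` vanishes wherever `q` does. -/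
noncomputable def discreteKLDiv (p q : ι → ℝ) : ℝ :=
  ∑ i, p i * Real.log (p i / q i)

/-- The `χ²`-divergence of two weight vectors on a finite type, used as an upper bound for
`discreteKLDiv`. It is real-valued, so it has this meaning only if `p` vanishes wherever `q`
does. -/
noncomputable def discreteChiSqDiv (p q : ι → ℝ) : ℝ :=
  ∑ i, (p i - q i) ^ 2 / q i

theorem mul_log_div_le_sq_sub_div_add_sub {a b : ℝ} (ha : 0 ≤ a) (hb : 0 ≤ b)
    (hab : b = 0 → a = 0) : a * Real.log (a / b) ≤ (a - b) ^ 2 / b + (a - b) := by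
  rcases ha.eq_or_lt with rfl | ha
  · rcases hb.eq_or_lt with rfl | hb
    · simp
    · exact le_of_eq (by field_simp; ring)
  · have hb : 0 < b := hb.lt_of_ne' fun h => ha.ne' (hab h)
    calc
      a * Real.log (a / b) ≤ a * (a / b - 1) := by
        gcongr
        exact Real.log_le_sub_one_of_pos (div_pos ha hb)
      _ = (a - b) ^ 2 / b + (a - b) := by field_simp; ring

theorem discreteKLDiv_le_discreteChiSqDiv {p q : ι → ℝ} (hp : ∀ i, 0 ≤ p i) (hq : ∀ i, 0 ≤ q i)
    (hpq : ∀ i, q i = 0 → p i = 0) (hsum : ∑ i, p i ≤ ∑ i, q i) :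
    discreteKLDiv p q ≤ discreteChiSqDiv p q :=
  calc
    discreteKLDiv p q ≤ ∑ i, ((p i - q i) ^ 2 / q i + (p i - q i)) :=
      Finset.sum_le_sum fun i _ => mul_log_div_le_sq_sub_div_add_sub (hp i) (hq i) (hpq i)
    _ = discreteChiSqDiv p q + (∑ i, p i - ∑ i, q i) := by
      rw [Finset.sum_add_distrib, Finset.sum_sub_distrib, discreteChiSqDiv]
    _ ≤ discreteChiSqDiv p q := by linarith

theorem discreteChiSqDiv_mixture (ε : ℝ) (q r : ι → ℝ) :
    discreteChiSqDiv ((1 - ε) • q + ε • r) q = ε ^ 2 * discreteChiSqDiv r q := by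
  simp only [discreteChiSqDiv, Finset.mul_sum, Pi.add_apply, Pi.smul_apply, smul_eq_mul]
  refine Finset.sum_congr rfl fun i _ => ?_
  ring

variable [DecidableEq ι]

theorem discreteChiSqDiv_single {q : ι → ℝ} {i : ι} (hi : q i ≠ 0) (hq : ∑ j, q j = 1) :
    discreteChiSqDiv (Pi.single i 1) q = (q i)⁻¹ - 1 := by
  have off_atom : ∀ j ∈ ({i}ᶜ : Finset ι),
      ((Pi.single i 1 : ι → ℝ) j - q j) ^ 2 / q j = q j := by
    intro j hj
    rw [Pi.single_eq_of_ne (by simpa using hj), zero_sub, neg_sq, sq, mul_self_div_self]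
  have mass_off_atom : ∑ j ∈ ({i}ᶜ : Finset ι), q j = 1 - q i := by
    rw [← hq, Fintype.sum_eq_add_sum_compl i, add_sub_cancel_left]
  rw [discreteChiSqDiv, Fintype.sum_eq_add_sum_compl i, Finset.sum_congr rfl off_atom,
    mass_off_atom, Pi.single_eq_same]
  field_simp
  ring

theorem discreteKLDiv_mixture_single_le {ε : ℝ} {q : ι → ℝ} {i : ι} (hε : ε ≤ 1)
    (hmix : 0 ≤ (1 - ε) * q i + ε) (hq : ∀ j, 0 ≤ q j) (hi : q i ≠ 0) (hsum : ∑ j, q j = 1) :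
    discreteKLDiv ((1 - ε) • q + ε • Pi.single i 1) q ≤ ε ^ 2 * ((q i)⁻¹ - 1) := by
  have off_atom : ∀ j ≠ i, ((1 - ε) • q + ε • Pi.single i 1 : ι → ℝ) j = (1 - ε) * q j := by
    intro j hj
    simp [hj]
  rw [← discreteChiSqDiv_single hi hsum, ← discreteChiSqDiv_mixture]
  refine discreteKLDiv_le_discreteChiSqDiv (fun j => ?nonneg) hq (fun j hj => ?abs_cont)
    (le_of_eq ?mass)
  case nonneg =>
    by_cases hji : j = i
    · simpa [hji] using hmix
    · rw [off_atom j hji]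
      exact mul_nonneg (sub_nonneg.2 hε) (hq j)
  case abs_cont =>
    rw [off_atom j (by rintro rfl; exact hi hj), hj, mul_zero]
  case mass =>
    simp [Finset.sum_add_distrib, ← Finset.mul_sum, hsum]

end DiscreteDivergence

theorem kl_divergence_bound_kapproval_general {ε p : ℝ} (hε : ε ≤ 1)
    (hmix : 0 ≤ ε + (1 - ε) * p) (hp0 : 0 < p) (hp1 : p < 1) :
    (ε + (1 - ε) * p) * Real.log ((1 - ε) + ε * p⁻¹) + (1 - ε) * (1 - p) * Real.log (1 - ε)
      ≤ ε ^ 2 * (p⁻¹ - 1) := by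
  have hp1' : 0 < 1 - p := sub_pos.2 hp1
  let q : Fin 2 → ℝ := ![p, 1 - p]
  have ratio_zero : ((1 - ε) * p + ε) / p = (1 - ε) + ε * p⁻¹ := by field_simp
  have ratio_one : (1 - ε) * (1 - p) / (1 - p) = 1 - ε := mul_div_cancel_right₀ _ hp1'.ne'
  calc
    _ = discreteKLDiv ((1 - ε) • q + ε • Pi.single 0 1) q := by
      simp [discreteKLDiv, q, ratio_zero, ratio_one, add_comm ε]
    _ ≤ ε ^ 2 * (p⁻¹ - 1) :=
      discreteKLDiv_mixture_single_le (i := 0) hε (by simpa [q, add_comm] using hmix)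
        (by simp [Fin.forall_fin_two, q, hp0.le, hp1.le]) hp0.ne' (by simp [q])

/-- KL-divergence bound used in the sample-complexity lower bound for k-approval. -/
theorem kl_divergence_bound_kapproval
    (ε k M : ℝ) (hε0 : 0 < ε) (hε1 : ε < 1) (hk : 0 < k) (hkM : k < M) :
    (ε + (1 - ε) * (k / M)) * Real.log ((1 - ε) + ε * (M / k))
      + (1 - ε) * (1 - k / M) * Real.log (1 - ε)
      ≤ ε ^ 2 * (M / k - 1) := by
  have hM : 0 < M := hk.trans hkM
  have hp : 0 < k / M := div_pos hk hM
  have hmix : 0 ≤ ε + (1 - ε) * (k / M) :=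
    add_nonneg hε0.le (mul_nonneg (sub_nonneg.2 hε1.le) hp.le)
  simpa only [inv_div] using
    kl_divergence_bound_kapproval_general hε1.le hmix hp ((div_lt_one hM).2 hkM)
end

section
/- There exists a constant K > 0 such that the following holds for the approval voting rule. Let V be an approval election with n votes over m candidates whose margin of victory is at least εn, with winner w, and let δ ∈ (0,1). If ℓ ≥ K·ln(m/δ)/ε² and we draw ℓ votes i.i.d. uniformly at random (with replacement) from V, then with probability at least 1 − δ, the empirical approval score ŝ(w) = (n/ℓ)·(number of sampled votes approving w) strictly exceeds ŝ(x) for every candidate x ≠ w; in particular, the candidate with maximum empirical approval score equals w. -/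
/-!
Striking `w` from `s(w) - s(x)` of the ballots that approve `w` but not `x` lets `x` catch up with
`w`, so a margin of victory of at least `εn` forces every score gap to be at least `εn`. A uniformly
sampled ballot then contributes a number in `[-1, 1]` of mean at most `-ε` to the lead of `x` over
`w`, and by Hoeffding's inequality this lead is nonnegative after `ℓ` samples with probability at
most `exp (-ℓε²/2)`. The union bound over the candidates yields the theorem with `K = 2`.
-/

/-- In an approval election, each vote is the set of approved candidates; the
approval score of a candidate is the number of votes approving it. -/
noncomputable def approvalScore {m n : ℕ} (V : Fin n → Finset (Fin m)) (x : Fin m) : ℕ :=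
  Nat.card {i : Fin n // x ∈ V i}

open MeasureTheory ProbabilityTheory Set

section Sampling

variable {Ω : Type*} [MeasurableSpace Ω]

theorem measureReal_pi_sum_sub_integral_ge_le {ι : Type*} [Fintype ι] {P : Measure Ω}
    [IsProbabilityMeasure P] {X : Ω → ℝ} {a b t : ℝ} (hX : AEMeasurable X P)
    (hab : ∀ᵐ ω ∂P, X ω ∈ Icc a b) (ht : 0 ≤ t) :
    (Measure.pi fun _ : ι => P).real
        {s | Fintype.card ι * t ≤ ∑ i, (X (s i) - ∫ ω, X ω ∂P)} ≤
      Real.exp (-2 * Fintype.card ι * t ^ 2 / (b - a) ^ 2) := by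
  have h_indep : iIndepFun (fun i (s : ι → Ω) => X (s i) - ∫ ω, X ω ∂P)
      (Measure.pi fun _ => P) :=
    iIndepFun_pi fun _ => hX.sub_const _
  have h_subG (i : ι) : HasSubgaussianMGF (fun s : ι → Ω => X (s i) - ∫ ω, X ω ∂P)
      ((‖b - a‖₊ / 2) ^ 2) (Measure.pi fun _ => P) := by
    refine .of_map (X := fun ω => X ω - ∫ ω, X ω ∂P) (measurable_pi_apply i).aemeasurable ?_
    rw [(measurePreserving_eval (fun _ : ι => P) i).map_eq]
    exact hasSubgaussianMGF_of_mem_Icc hX hab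
  refine (HasSubgaussianMGF.measure_sum_ge_le_of_iIndepFun h_indep (s := Finset.univ)
    (fun i _ => h_subG i) (by positivity)).trans_eq ?_
  congr 1
  rcases isEmpty_or_nonempty ι with _ | _
  · simp
  · have hι : (Fintype.card ι : ℝ) ≠ 0 := by positivity
    simp only [Finset.sum_const, Finset.card_univ, nsmul_eq_mul]
    push_cast
    rw [div_pow, Real.norm_eq_abs, sq_abs]
    field_simp

variable [MeasurableSingletonClass Ω]

lemma uniformOn_univ_real [Finite Ω] (A : Set Ω) :
    (uniformOn univ).real A = (Nat.card A : ℝ) / Nat.card Ω := by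
  cases nonempty_fintype Ω
  rw [measureReal_def, uniformOn_univ, Measure.count_apply_finite _ A.toFinite]
  simp [Nat.card_coe_set_eq, ncard_eq_toFinset_card A]

lemma integral_uniformOn_univ [Fintype Ω] (X : Ω → ℝ) :
    ∫ ω, X ω ∂uniformOn univ = (∑ ω, X ω) / Fintype.card Ω := by
  simp [uniformOn, ProbabilityTheory.cond, div_eq_inv_mul]

end Sampling

section Lead

variable {α : Type*} [DecidableEq α]

/-- The contribution of the ballot `S` to the lead of the candidate `x` over the candidate `y`. -/
def ballotLead (x y : α) (S : Finset α) : ℝ :=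
  (if x ∈ S then 1 else 0) - (if y ∈ S then 1 else 0)

lemma ballotLead_mem_Icc (x y : α) (S : Finset α) : ballotLead x y S ∈ Icc (-1) 1 := by
  unfold ballotLead
  split_ifs <;> norm_num

end Lead

section Approval

variable {m n : ℕ} {V : Fin n → Finset (Fin m)} {w x : Fin m}

lemma approvalScore_eq_card_filter (V : Fin n → Finset (Fin m)) (x : Fin m) :
    approvalScore V x = (Finset.univ.filter fun i => x ∈ V i).card := by
  rw [approvalScore, Nat.card_eq_fintype_card, Fintype.card_subtype]

lemma sum_ballotLead (V : Fin n → Finset (Fin m)) (x y : Fin m) :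
    ∑ i, ballotLead x y (V i) = (approvalScore V x : ℝ) - approvalScore V y := by
  simp [ballotLead, approvalScore_eq_card_filter]

/-- The margin of victory of `w` in the profile `V` is at least `k`: every profile in which `w` is
not the unique winner differs from `V` in at least `k` votes. -/
def HasMargin (V : Fin n → Finset (Fin m)) (w : Fin m) (k : ℝ) : Prop :=
  ∀ V' : Fin n → Finset (Fin m), (∃ x, x ≠ w ∧ approvalScore V' w ≤ approvalScore V' x) →
    k ≤ Nat.card {i // V' i ≠ V i}

lemma exists_approvalScore_le_and_card_ne_le (V : Fin n → Finset (Fin m)) (hx : x ≠ w) :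
    ∃ V' : Fin n → Finset (Fin m), approvalScore V' w ≤ approvalScore V' x ∧
      Nat.card {i // V' i ≠ V i} ≤ approvalScore V w - approvalScore V x := by
  set W : Finset (Fin n) := {i | w ∈ V i}
  set X : Finset (Fin n) := {i | x ∈ V i}
  obtain ⟨T, hTW, hT⟩ := Finset.exists_subset_card_eq (Finset.le_card_sdiff X W)
  let V' : Fin n → Finset (Fin m) := fun i => if i ∈ T then (V i).erase w else V i
  have score_x : approvalScore V' x = X.card := by
    rw [approvalScore_eq_card_filter]
    congr 1
    ext i
    by_cases hi : i ∈ T <;> simp [V', X, hi, hx]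
  have score_w : approvalScore V' w = W.card - T.card := by
    rw [approvalScore_eq_card_filter, ← Finset.card_sdiff_of_subset (hTW.trans Finset.sdiff_subset)]
    congr 1
    ext i
    by_cases hi : i ∈ T <;> simp [V', W, hi]
  have changed_subset : (Finset.univ.filter fun i => V' i ≠ V i) ⊆ T := by
    intro i hi
    by_contra hiT
    simp [V', hiT] at hi
  refine ⟨V', by omega, ?_⟩
  rw [Nat.card_eq_fintype_card, Fintype.card_subtype, approvalScore_eq_card_filter V w,
    approvalScore_eq_card_filter V x, ← hT]
  exact Finset.card_le_card changed_subset

lemma HasMargin.le_approvalScore_sub {k : ℝ} (h : HasMargin V w k) (hx : x ≠ w)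
    (hle : approvalScore V x ≤ approvalScore V w) :
    k ≤ (approvalScore V w : ℝ) - approvalScore V x := by
  obtain ⟨V', hV', hcard⟩ := exists_approvalScore_le_and_card_ne_le V hx
  rw [← Nat.cast_sub hle]
  exact (h V' ⟨x, hx, hV'⟩).trans (by exact_mod_cast hcard)

variable [NeZero n] {ε : ℝ} (ℓ : ℕ)

theorem uniformOn_real_approvalScore_le_le_exp (hε : 0 ≤ ε)
    (hgap : ε * n ≤ (approvalScore V w : ℝ) - approvalScore V x) :
    (uniformOn univ).real {s : Fin ℓ → Fin n |
        approvalScore (fun j => V (s j)) w ≤ approvalScore (fun j => V (s j)) x} ≤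
      Real.exp (-(ℓ * ε ^ 2 / 2)) := by
  set X : Fin n → ℝ := fun i => ballotLead x w (V i)
  have hmean : ∫ i, X i ∂uniformOn univ ≤ -ε := by
    rw [integral_uniformOn_univ, sum_ballotLead, Fintype.card_fin,
      div_le_iff₀ (by exact_mod_cast NeZero.pos n)]
    linarith
  have hoeffding := measureReal_pi_sum_sub_integral_ge_le (ι := Fin ℓ) (P := uniformOn univ)
    (X := X) Measurable.of_discrete.aemeasurable
    (.of_forall fun i => ballotLead_mem_Icc x w (V i)) hε
  rw [← uniformOn_pi, pi_univ, Fintype.card_fin] at hoeffding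
  refine (measureReal_mono fun s hs => ?_).trans (hoeffding.trans_eq (by ring_nf))
  have hlead : 0 ≤ ∑ j, X (s j) := by
    rw [sum_ballotLead (fun j => V (s j)), sub_nonneg]
    exact_mod_cast hs
  have hdev : ℓ * ε ≤ ℓ * -∫ i, X i ∂uniformOn univ := by gcongr; linarith
  simp only [mem_ofPred_eq, Finset.sum_sub_distrib, Finset.sum_const, Finset.card_univ,
    Fintype.card_fin, nsmul_eq_mul]
  linarith

theorem one_sub_le_uniformOn_real_forall_approvalScore_lt (hε : 0 ≤ ε)
    (hgap : ∀ x, x ≠ w → ε * n ≤ (approvalScore V w : ℝ) - approvalScore V x) :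
    1 - m * Real.exp (-(ℓ * ε ^ 2 / 2)) ≤
      (uniformOn univ).real {s : Fin ℓ → Fin n | ∀ x, x ≠ w →
        approvalScore (fun j => V (s j)) x < approvalScore (fun j => V (s j)) w} := by
  set good : Set (Fin ℓ → Fin n) := {s | ∀ x, x ≠ w →
    approvalScore (fun j => V (s j)) x < approvalScore (fun j => V (s j)) w}
  let bad (x : Fin m) : Set (Fin ℓ → Fin n) :=
    {s | approvalScore (fun j => V (s j)) w ≤ approvalScore (fun j => V (s j)) x}
  have hcover : goodᶜ ⊆ ⋃ x ∈ Finset.univ.erase w, bad x := by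
    intro s hs
    simpa [good, bad] using hs
  have hunion : (uniformOn univ).real goodᶜ ≤ m * Real.exp (-(ℓ * ε ^ 2 / 2)) :=
    calc
      _ ≤ (uniformOn univ).real (⋃ x ∈ Finset.univ.erase w, bad x) :=
        measureReal_mono hcover (measure_ne_top _ _)
      _ ≤ ∑ x ∈ Finset.univ.erase w, (uniformOn univ).real (bad x) :=
        measureReal_biUnion_finset_le _ _
      _ ≤ ∑ x ∈ Finset.univ.erase w, Real.exp (-(ℓ * ε ^ 2 / 2)) :=
        Finset.sum_le_sum fun x hx =>
          uniformOn_real_approvalScore_le_le_exp ℓ hε (hgap x (Finset.ne_of_mem_erase hx))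
      _ ≤ ∑ _x : Fin m, Real.exp (-(ℓ * ε ^ 2 / 2)) :=
        Finset.sum_le_sum_of_subset_of_nonneg (Finset.erase_subset _ _) fun _ _ _ => by positivity
      _ = _ := by simp
  rw [probReal_compl_eq_one_sub good.toFinite.measurableSet] at hunion
  linarith

end Approval

lemma mul_exp_neg_le_of_log_div_le {M δ ε ℓ : ℝ} (hM : 0 < M) (hδ : 0 < δ) (hε : 0 < ε)
    (hℓ : 2 * Real.log (M / δ) / ε ^ 2 ≤ ℓ) : M * Real.exp (-(ℓ * ε ^ 2 / 2)) ≤ δ := by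
  have hlog : Real.log (M / δ) ≤ ℓ * ε ^ 2 / 2 := by
    rw [div_le_iff₀ (by positivity)] at hℓ
    linarith
  rw [Real.log_le_iff_le_exp (by positivity), div_le_iff₀ hδ] at hlog
  rwa [Real.exp_neg, ← div_eq_mul_inv, div_le_iff₀ (Real.exp_pos _), mul_comm]

/-- Sample complexity O(log(m/δ)/ε²) for winner determination under the approval
voting rule: if the margin of victory is at least εn with unique winner w and
ℓ ≥ K·ln(m/δ)/ε², then on at least a (1-δ) fraction of the n^ℓ equiprobable tuples
of ℓ i.i.d. uniform vote samples, the empirical approval score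
ŝ(x) = (n/ℓ)·(number of sampled votes approving x) of w strictly exceeds that of
every other candidate. -/
theorem approval_sample_complexity :
    ∃ K : ℝ, 0 < K ∧
      ∀ (m n : ℕ) (ε δ : ℝ), 0 < ε → ε < 1 → 0 < δ → δ < 1 →
      ∀ (V : Fin n → Finset (Fin m)) (w : Fin m),
        (∀ x : Fin m, x ≠ w → approvalScore V x < approvalScore V w) →
        (∀ V' : Fin n → Finset (Fin m),
          (∃ x : Fin m, x ≠ w ∧ approvalScore V' w ≤ approvalScore V' x) →
          ε * n ≤ (Nat.card {i : Fin n // V' i ≠ V i} : ℝ)) →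
        ∀ ℓ : ℕ, K * Real.log ((m : ℝ) / δ) / ε ^ 2 ≤ ℓ →
          (1 - δ) * (n : ℝ) ^ ℓ ≤
            (Nat.card {s : Fin ℓ → Fin n // ∀ x : Fin m, x ≠ w →
              (n : ℝ) / ℓ * (approvalScore (fun j => V (s j)) x : ℝ)
                < (n : ℝ) / ℓ * (approvalScore (fun j => V (s j)) w : ℝ)} : ℝ) := by
  refine ⟨2, two_pos, fun m n ε δ hε _ hδ hδ1 V w hw hV ℓ hℓ => ?_⟩
  have hm : (1 : ℝ) ≤ m := by exact_mod_cast w.pos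
  have hlog : 0 < Real.log (m / δ) := Real.log_pos ((one_lt_div hδ).2 (hδ1.trans_le hm))
  have hℓ0 : (0 : ℝ) < ℓ := lt_of_lt_of_le (by positivity) hℓ
  rcases n.eq_zero_or_pos with rfl | hn
  · simp [Nat.cast_pos.1 hℓ0 |>.ne']
  have : NeZero n := ⟨hn.ne'⟩
  have hscale : (0 : ℝ) < n / ℓ := by positivity
  have hgap (x : Fin m) (hx : x ≠ w) : ε * n ≤ (approvalScore V w : ℝ) - approvalScore V x :=
    HasMargin.le_approvalScore_sub hV hx (hw x hx).le
  have hprob := one_sub_le_uniformOn_real_forall_approvalScore_lt ℓ hε.le hgap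
  have hexp := mul_exp_neg_le_of_log_div_le (zero_lt_one.trans_le hm) hδ hε hℓ
  rw [uniformOn_univ_real, Nat.card_fun, Nat.card_fin, Nat.card_fin, Nat.cast_pow,
    le_div_iff₀ (by positivity)] at hprob
  simp only [mul_lt_mul_iff_right₀ hscale, Nat.cast_lt]
  exact le_trans (by gcongr) hprob
end

section
/- Let λ > 0 and define f : ℝ → ℝ by f(x) = e^{−λ/x}. Then for all reals x, y with x > 0, y > 0, x < y, and λ/(x + y) > 2, we have f(x) + f(y) ≤ f(x + y). -/
/-! Put `r = lam / (x + y)`, `a = lam / x - r` and `b = lam / y - r`. Then `a * b = r ^ 2`, so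
`1 ≤ a * b` as soon as `1 ≤ r`. Dividing the claim by `exp (-r)` leaves `exp (-a) + exp (-b) ≤ 1`,
which follows from `exp (-t) ≤ 1 / (1 + t)`. -/

theorem inv_one_add_add_inv_one_add_le_one_iff {K : Type*} [Field K] [LinearOrder K]
    [IsStrictOrderedRing K] {a b : K} (ha : -1 < a) (hb : -1 < b) :
    (1 + a)⁻¹ + (1 + b)⁻¹ ≤ 1 ↔ 1 ≤ a * b := by
  have ha' : 0 < 1 + a := neg_lt_iff_pos_add'.mp ha
  have hb' : 0 < 1 + b := neg_lt_iff_pos_add'.mp hb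
  rw [inv_add_inv ha'.ne' hb'.ne', div_le_one (mul_pos ha' hb')]
  constructor <;> intro h <;> linarith

theorem div_sub_div_add_mul_div_sub_div_add {K : Type*} [Field K] {x y : K} (hx : x ≠ 0)
    (hy : y ≠ 0) (hxy : x + y ≠ 0) (c : K) :
    (c / x - c / (x + y)) * (c / y - c / (x + y)) = (c / (x + y)) ^ 2 := by
  field_simp
  ring

theorem exp_neg_le_inv_one_add {t : ℝ} (ht : -1 < t) : Real.exp (-t) ≤ (1 + t)⁻¹ := by
  rw [Real.exp_neg, add_comm]
  exact inv_anti₀ (neg_lt_iff_pos_add.mp ht) (Real.add_one_le_exp t)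

theorem exp_neg_add_exp_neg_le_one {a b : ℝ} (ha : 0 < a) (hab : 1 ≤ a * b) :
    Real.exp (-a) + Real.exp (-b) ≤ 1 := by
  have hb : 0 < b := pos_of_mul_pos_right (zero_lt_one.trans_le hab) ha.le
  have ha' : -1 < a := neg_one_lt_zero.trans ha
  have hb' : -1 < b := neg_one_lt_zero.trans hb
  calc
    Real.exp (-a) + Real.exp (-b) ≤ (1 + a)⁻¹ + (1 + b)⁻¹ :=
      add_le_add (exp_neg_le_inv_one_add ha') (exp_neg_le_inv_one_add hb')
    _ ≤ 1 := (inv_one_add_add_inv_one_add_le_one_iff ha' hb').mpr hab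

theorem exp_neg_add_exp_neg_le_exp_neg {p q r : ℝ} (hrp : r < p)
    (h : 1 ≤ (p - r) * (q - r)) :
    Real.exp (-p) + Real.exp (-q) ≤ Real.exp (-r) := by
  calc
    Real.exp (-p) + Real.exp (-q)
        = Real.exp (-r) * (Real.exp (-(p - r)) + Real.exp (-(q - r))) := by
      rw [mul_add, ← Real.exp_add, ← Real.exp_add]
      ring_nf
    _ ≤ Real.exp (-r) :=
      mul_le_of_le_one_right (Real.exp_nonneg _)
        (exp_neg_add_exp_neg_le_one (sub_pos.mpr hrp) h)

theorem exp_neg_div_superadditive_general {lam x y : ℝ} (hx : 0 < x) (hy : 0 < y)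
    (h : x + y ≤ lam) :
    Real.exp (-(lam / x)) + Real.exp (-(lam / y)) ≤ Real.exp (-(lam / (x + y))) := by
  have hs : 0 < x + y := add_pos hx hy
  have hlam : 0 < lam := hs.trans_le h
  apply exp_neg_add_exp_neg_le_exp_neg
  · exact div_lt_div_of_pos_left hlam hx (lt_add_of_pos_right x hy)
  · rw [div_sub_div_add_mul_div_sub_div_add hx.ne' hy.ne' hs.ne']
    exact one_le_pow₀ ((one_le_div hs).mpr h)

/-- For f(x) = e^{-λ/x}: f(x) + f(y) ≤ f(x+y) when x, y > 0, x < y and λ/(x+y) > 2. -/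
theorem exp_neg_div_superadditive
    (lam : ℝ) (hlam : 0 < lam) (x y : ℝ) (hx : 0 < x) (hy : 0 < y)
    (hxy : x < y) (h : 2 < lam / (x + y)) :
    Real.exp (-(lam / x)) + Real.exp (-(lam / y)) ≤ Real.exp (-(lam / (x + y))) :=
  exp_neg_div_superadditive_general hx hy
    ((one_le_div (add_pos hx hy)).mp (one_le_two.trans h.le))
end

section
/- There exists a constant K > 0 such that the following holds for the k-approval voting rule. Let V be an n-vote election (votes are linear orders over m candidates, and each candidate's k-approval score is the number of votes ranking it in the top k positions) whose margin of victory is at least εn, with winner w, and let δ ∈ (0,1). If ℓ ≥ K·ln(k/δ)/ε² and we draw ℓ votes i.i.d. uniformly at random (with replacement) from V, then with probability at least 1 − δ the candidate with maximum empirical k-approval score on the sample equals w. In particular, the sample complexity is independent of m, and for plurality (k = 1) it is independent of both m and n. -/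
/-- k-approval score of a candidate: the number of votes ranking it among the top k
positions. A vote is a permutation of `Fin m` (candidate `c` is ranked at position
`v c`, position `0` being the top). -/
noncomputable def kApprovalScore {m n : ℕ} (k : ℕ)
    (V : Fin n → Equiv.Perm (Fin m)) (x : Fin m) : ℕ :=
  Nat.card {i : Fin n // ((V i) x : ℕ) < k}

/-!
A sample is lost only if `w` scores less than half of its expected score, or if some competitor
catches up with `w`. When `ℓε²` is large, the exponential-moment bound for the second event may be
multiplied by the ratio of the competitor's score to half the expected score of `w`, which is at
least `1` there. The resulting bound is proportional to the competitor's approval rate, and these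
rates add up to at most `k`, so the union bound costs a factor `k` instead of `m`.

When `ℓε²` is small, `ℓε² ≥ K ln(k/δ)` forces `k = 1` and `δ` close to `1`, and it is enough that
`w` wins with probability at least a constant times `ℓε²`. Turning sampled votes for the leader into
votes for `w` maps losing samples to winning ones. Comparing how many ways there are to do this
forwards and backwards bounds the probability of losing to each competitor by a multiple,
proportional to its vote share, of the probability of winning.
-/

namespace KApproval

open Finset Real
open scoped BigOperators

section Prob

variable {α ι : Type*}

/-- The probability of the event `A` for a uniformly distributed element of a finite type. For a
set of voters it is the fraction of the electorate that the set makes up. -/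
noncomputable def prob (A : Set α) : ℝ := A.ncard / Nat.card α

lemma prob_nonneg (A : Set α) : 0 ≤ prob A := by unfold prob; positivity

lemma prob_empty : prob (∅ : Set α) = 0 := by simp [prob]

lemma prob_union_le (A B : Set α) : prob (A ∪ B) ≤ prob A + prob B := by
  unfold prob
  rw [← add_div]
  gcongr
  exact_mod_cast Set.ncard_union_le A B

lemma nonempty_of_prob_pos {A : Set α} (h : 0 < prob A) : A.Nonempty := by
  rw [Set.nonempty_iff_ne_empty]
  rintro rfl
  simp [prob] at h

lemma prob_eq_expect_indicator [Fintype α] (A : Set α) :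
    prob A = 𝔼 a, A.indicator (1 : α → ℝ) a := by
  classical
  rw [Fintype.expect_eq_sum_div_card, ← Nat.card_eq_fintype_card, prob,
    Set.ncard_eq_toFinset_card']
  simp [Set.indicator_apply]

lemma prob_le_expect [Fintype α] {A : Set α} {g : α → ℝ} (hg : ∀ a, 0 ≤ g a)
    (hA : ∀ a ∈ A, 1 ≤ g a) : prob A ≤ 𝔼 a, g a := by
  rw [prob_eq_expect_indicator]
  exact expect_le_expect fun a _ ↦ Set.indicator_le' (by simpa using hA) (fun b _ ↦ hg b) a

variable [Finite α]

lemma prob_mono {A B : Set α} (h : A ⊆ B) : prob A ≤ prob B := by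
  unfold prob
  gcongr
  exact B.toFinite

lemma prob_le_one (A : Set α) : prob A ≤ 1 :=
  div_le_one_of_le₀ (by exact_mod_cast Set.ncard_le_card A) (by positivity)

lemma prob_compl [Nonempty α] (A : Set α) : prob Aᶜ = 1 - prob A := by
  have hα : (Nat.card α : ℝ) ≠ 0 := Nat.cast_ne_zero.2 Nat.card_pos.ne'
  rw [eq_sub_iff_add_eq', prob, prob, ← add_div, div_eq_one_iff_eq hα]
  exact_mod_cast Set.ncard_add_ncard_compl A

lemma prob_iUnion_le [Fintype ι] (A : ι → Set α) : prob (⋃ i, A i) ≤ ∑ i, prob (A i) := by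
  have := Fintype.ofFinite α
  simp_rw [prob_eq_expect_indicator (A _), ← expect_sum_comm]
  refine prob_le_expect (fun a ↦ sum_nonneg fun i _ ↦ Set.indicator_nonneg (by simp) a) ?_
  intro a ha
  obtain ⟨i, hi⟩ := Set.mem_iUnion.1 ha
  calc (1 : ℝ) = (A i).indicator (1 : α → ℝ) a := by simp [hi]
    _ ≤ ∑ i, (A i).indicator (1 : α → ℝ) a :=
      single_le_sum (f := fun i ↦ (A i).indicator (1 : α → ℝ) a)
        (fun i _ ↦ Set.indicator_nonneg (by simp) a) (mem_univ i)

end Prob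

section Sampling

variable {Ω ι : Type*} {ℓ : ℕ}

/-- The number of draws of the sample `f` that land in `S`. When `S` consists of the voters
approving a candidate, this is the score of that candidate on the sample. -/
noncomputable def hits (S : Set Ω) (f : Fin ℓ → Ω) : ℕ := (f ⁻¹' S).ncard

lemma hits_eq_sum_indicator (S : Set Ω) (f : Fin ℓ → Ω) :
    (hits S f : ℝ) = ∑ j, S.indicator (1 : Ω → ℝ) (f j) := by
  classical
  rw [hits, Set.ncard_eq_toFinset_card']
  simp [Set.indicator_apply]

lemma expect_prod_apply [Fintype Ω] (g : Fin ℓ → Ω → ℝ) :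
    𝔼 f : Fin ℓ → Ω, ∏ i, g i (f i) = ∏ i, 𝔼 a, g i a := by
  simp_rw [Fintype.expect_eq_sum_div_card, prod_div_distrib, prod_univ_sum, Fintype.piFinset_univ]
  simp

lemma expect_exp_sum [Fintype Ω] (X : Ω → ℝ) :
    𝔼 f : Fin ℓ → Ω, exp (∑ i, X (f i)) = (𝔼 a, exp (X a)) ^ ℓ := by
  simp [exp_sum, expect_prod_apply (fun _ a ↦ exp (X a))]

lemma expect_apply_mul_exp_sum [Fintype Ω] (X Y : Ω → ℝ) (j : Fin ℓ) :
    𝔼 f : Fin ℓ → Ω, Y (f j) * exp (∑ i, X (f i)) =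
      (𝔼 a, Y a * exp (X a)) * (𝔼 a, exp (X a)) ^ (ℓ - 1) := by
  classical
  have key := expect_prod_apply (Ω := Ω) fun i a ↦
    (if i = j then Y a else 1) * exp (X a)
  have erase : ∏ i ∈ univ.erase j, 𝔼 a, (if i = j then Y a else 1) * exp (X a) =
      (𝔼 a, exp (X a)) ^ (ℓ - 1) := by
    rw [prod_congr rfl (g := fun _ ↦ 𝔼 a, exp (X a)) fun i hi ↦ by simp [ne_of_mem_erase hi]]
    simp
  rw [← mul_prod_erase _ _ (mem_univ j), erase] at key
  simpa only [prod_mul_distrib, exp_sum, prod_ite_eq', mem_univ, if_true] using key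

lemma expect_sum_mul_exp_sum [Fintype Ω] (X Y : Ω → ℝ) :
    𝔼 f : Fin ℓ → Ω, (∑ j, Y (f j)) * exp (∑ i, X (f i)) =
      ℓ * ((𝔼 a, Y a * exp (X a)) * (𝔼 a, exp (X a)) ^ (ℓ - 1)) := by
  simp [sum_mul, expect_sum_comm, expect_apply_mul_exp_sum]

lemma prob_hits_lt_half_le [Finite Ω] [Nonempty Ω] (S : Set Ω) :
    prob {f : Fin ℓ → Ω | (hits S f : ℝ) < ℓ * prob S / 2} ≤ exp (-(ℓ * prob S / 8)) := by
  have := Fintype.ofFinite Ω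
  have mgf : 𝔼 a, exp (-S.indicator (1 : Ω → ℝ) a) ≤ exp (-(5 / 8 * prob S)) := by
    calc 𝔼 a, exp (-S.indicator (1 : Ω → ℝ) a)
        ≤ 𝔼 a, (1 - 5 / 8 * S.indicator (1 : Ω → ℝ) a) := by
          refine expect_le_expect fun a _ ↦ ?_
          by_cases ha : a ∈ S
          · simp only [ha, Set.indicator_of_mem, Pi.one_apply]
            linarith [exp_neg_one_lt_d9]
          · simp [ha]
      _ = 1 - 5 / 8 * prob S := by
          rw [prob_eq_expect_indicator, expect_sub_distrib, Fintype.expect_one, mul_expect]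
      _ ≤ exp (-(5 / 8 * prob S)) := one_sub_le_exp_neg _
  calc prob {f : Fin ℓ → Ω | (hits S f : ℝ) < ℓ * prob S / 2}
      ≤ 𝔼 f : Fin ℓ → Ω,
          exp (ℓ * prob S / 2) * exp (∑ j, -S.indicator (1 : Ω → ℝ) (f j)) := by
        refine prob_le_expect (fun f ↦ by positivity) fun f hf ↦ ?_
        rw [sum_neg_distrib, ← hits_eq_sum_indicator, ← exp_add, one_le_exp_iff]
        linarith [hf.out]
    _ = exp (ℓ * prob S / 2) * (𝔼 a, exp (-S.indicator (1 : Ω → ℝ) a)) ^ ℓ := by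
        rw [← mul_expect, expect_exp_sum fun a ↦ -S.indicator (1 : Ω → ℝ) a]
    _ ≤ exp (ℓ * prob S / 2) * exp (-(5 / 8 * prob S)) ^ ℓ := by
        gcongr
    _ = exp (-(ℓ * prob S / 8)) := by rw [← exp_nat_mul, ← exp_add]; ring_nf

lemma expect_exp_indicator_sub_le [Fintype Ω] [Nonempty Ω] {S T : Set Ω} {ε : ℝ}
    (hε : 0 ≤ ε) (hεT : ε ≤ prob T) (gap : prob S + ε ≤ prob T) :
    𝔼 a, exp (ε / (4 * prob T) * (S.indicator 1 a - T.indicator 1 a)) ≤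
      exp (-(ε ^ 2 / (8 * prob T))) := by
  rcases (hε.trans hεT).eq_or_lt with hT | hT
  · simp [← hT]
  set s := ε / (4 * prob T) with hs
  have hs0 : 0 ≤ s := by positivity
  have hs1 : s ≤ 1 := by rw [hs, div_le_one (by positivity)]; linarith
  have quadratic (y : ℝ) (hy : |y| ≤ 1) : exp y ≤ 1 + y + y ^ 2 := by
    linarith [le_of_abs_le (abs_exp_sub_one_sub_id_le hy)]
  calc 𝔼 a, exp (s * (S.indicator 1 a - T.indicator 1 a))
      ≤ 𝔼 a, (1 + s * (S.indicator (1 : Ω → ℝ) a - T.indicator (1 : Ω → ℝ) a)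
          + s ^ 2 * (S.indicator (1 : Ω → ℝ) a + T.indicator (1 : Ω → ℝ) a)) := by
        refine expect_le_expect fun a _ ↦ ?_
        by_cases haS : a ∈ S <;> by_cases haT : a ∈ T <;>
          simp only [haS, haT, not_false_eq_true, Set.indicator_of_mem, Set.indicator_of_notMem,
            Pi.one_apply, sub_self, sub_zero, zero_sub, mul_zero, mul_one, exp_zero, add_zero]
        · nlinarith
        · simpa using quadratic s (abs_le.2 ⟨by linarith, hs1⟩)
        · simpa using quadratic (s * -1) (abs_le.2 ⟨by linarith, by linarith⟩)
        · simp
    _ = 1 + s * (prob S - prob T) + s ^ 2 * (prob S + prob T) := by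
        simp only [prob_eq_expect_indicator, expect_add_distrib, expect_sub_distrib, ← mul_expect,
          Fintype.expect_one]
    _ ≤ 1 + s * (-ε) + s ^ 2 * (2 * prob T) := by gcongr <;> linarith
    _ = 1 - ε ^ 2 / (8 * prob T) := by rw [hs]; field
    _ ≤ exp (-(ε ^ 2 / (8 * prob T))) := one_sub_le_exp_neg _

/- The factor `hits S f`, which is at least `ℓ * prob T / 2` on the event, makes the bound
proportional to `prob S`; summed over competitors `S` such bounds do not see their number. -/
lemma prob_hits_le_hits_le_mul [Fintype Ω] (S T : Set Ω) {s : ℝ} (hs : 0 ≤ s) (hℓ : 0 < ℓ)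
    (hT : 0 < prob T) :
    prob {f : Fin ℓ → Ω | hits T f ≤ hits S f ∧ ℓ * prob T / 2 ≤ hits S f} ≤
      2 * (prob S / prob T) * exp s *
        (𝔼 a, exp (s * (S.indicator 1 a - T.indicator 1 a))) ^ (ℓ - 1) := by
  have : (0 : ℝ) < ℓ := by exact_mod_cast hℓ
  have indicator_nonneg (U : Set Ω) (a : Ω) : 0 ≤ U.indicator (1 : Ω → ℝ) a :=
    Set.indicator_nonneg (by simp) a
  set X : Ω → ℝ := fun a ↦ s * (S.indicator 1 a - T.indicator 1 a) with hX
  have exponent (f : Fin ℓ → Ω) : ∑ i, X (f i) = s * (hits S f - hits T f) := by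
    rw [hX, ← mul_sum, sum_sub_distrib, ← hits_eq_sum_indicator, ← hits_eq_sum_indicator]
  have tilt : 𝔼 a, S.indicator 1 a * exp (X a) ≤ prob S * exp s := by
    rw [prob_eq_expect_indicator, expect_mul]
    refine expect_le_expect fun a _ ↦ ?_
    have := indicator_nonneg S a
    gcongr
    refine mul_le_of_le_one_right hs ?_
    linarith [Set.indicator_le_self' (s := S) (f := (1 : Ω → ℝ)) (by simp) a,
      indicator_nonneg T a, Pi.one_apply (M := fun _ ↦ ℝ) a]
  calc prob {f : Fin ℓ → Ω | hits T f ≤ hits S f ∧ ℓ * prob T / 2 ≤ hits S f}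
      ≤ 𝔼 f : Fin ℓ → Ω, 2 / (ℓ * prob T) *
          ((∑ j, S.indicator 1 (f j)) * exp (∑ i, X (f i))) := by
        simp_rw [exponent, ← hits_eq_sum_indicator, ← mul_assoc]
        refine prob_le_expect (fun f ↦ by positivity) fun f hf ↦ ?_
        refine one_le_mul_of_one_le_of_one_le ?_ ?_
        · rw [div_mul_eq_mul_div, one_le_div (by positivity)]
          linarith [hf.2]
        · exact one_le_exp (mul_nonneg hs (sub_nonneg.2 (by exact_mod_cast hf.1)))
    _ = 2 / prob T * ((𝔼 a, S.indicator 1 a * exp (X a)) * (𝔼 a, exp (X a)) ^ (ℓ - 1)) := by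
        rw [← mul_expect, expect_sum_mul_exp_sum]; field
    _ ≤ 2 / prob T * ((prob S * exp s) * (𝔼 a, exp (X a)) ^ (ℓ - 1)) := by
        have : 0 ≤ 𝔼 a, exp (X a) := expect_nonneg fun a _ ↦ (exp_pos _).le
        gcongr
    _ = _ := by ring

lemma prob_hits_le_hits_le [Finite Ω] [Nonempty Ω] {S T : Set Ω} {ε : ℝ} (hℓ : 0 < ℓ)
    (hε : 0 < ε) (hεT : ε ≤ prob T) (gap : prob S + ε ≤ prob T) :
    prob {f : Fin ℓ → Ω | hits T f ≤ hits S f ∧ ℓ * prob T / 2 ≤ hits S f} ≤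
      4 * (prob S / prob T) * exp (-(ℓ * ε ^ 2 / (8 * prob T))) := by
  have := Fintype.ofFinite Ω
  have hS := prob_nonneg S
  have hT : 0 < prob T := hε.trans_le hεT
  set s := ε / (4 * prob T) with hs
  have correction : exp (s + ε ^ 2 / (8 * prob T)) ≤ 2 := by
    have hs1 : s ≤ 1 / 4 := by rw [hs, div_le_div_iff₀ (by positivity) (by norm_num)]; linarith
    have hε1 : ε ^ 2 / (8 * prob T) ≤ 1 / 8 := by
      rw [div_le_div_iff₀ (by positivity) (by norm_num)]; nlinarith [prob_le_one T]
    calc exp (s + ε ^ 2 / (8 * prob T)) ≤ exp (1 / 2) := by gcongr; linarith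
      _ ≤ 2 := by
        rw [← le_log_iff_exp_le two_pos]; linarith [log_two_gt_d9]
  calc prob {f : Fin ℓ → Ω | hits T f ≤ hits S f ∧ ℓ * prob T / 2 ≤ hits S f}
      ≤ 2 * (prob S / prob T) * exp s *
          (𝔼 a, exp (s * (S.indicator 1 a - T.indicator 1 a))) ^ (ℓ - 1) :=
        prob_hits_le_hits_le_mul S T (by positivity) hℓ hT
    _ ≤ 2 * (prob S / prob T) * exp s * exp (-(ε ^ 2 / (8 * prob T))) ^ (ℓ - 1) := by
        gcongr
        exact expect_exp_indicator_sub_le hε.le hεT gap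
    _ = 2 * (prob S / prob T) * (exp (s + ε ^ 2 / (8 * prob T)) *
          exp (-(ℓ * ε ^ 2 / (8 * prob T)))) := by
        rw [← exp_nat_mul, mul_assoc _ (exp s), ← exp_add, ← exp_add]
        push_cast [Nat.cast_sub hℓ]
        ring_nf
    _ ≤ 2 * (prob S / prob T) * (2 * exp (-(ℓ * ε ^ 2 / (8 * prob T)))) := by gcongr
    _ = _ := by ring

/-- The samples on which `w` scores strictly more than every other candidate, where `S x` is the
set of voters approving the candidate `x`. -/
def winningSamples (S : ι → Set Ω) (w : ι) (ℓ : ℕ) : Set (Fin ℓ → Ω) :=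
  {f | ∀ x, x ≠ w → hits (S x) f < hits (S w) f}

/-- The samples on which `x` is a best scoring candidate other than `w` and scores at least as
much as `w`, which scores at least `θ`. -/
def losingTo (S : ι → Set Ω) (w x : ι) (θ : ℝ) (ℓ : ℕ) : Set (Fin ℓ → Ω) :=
  {f | x ≠ w ∧ θ ≤ hits (S w) f ∧ hits (S w) f ≤ hits (S x) f ∧
    ∀ y, y ≠ w → hits (S y) f ≤ hits (S x) f}

lemma losingTo_self (S : ι → Set Ω) (w : ι) (θ : ℝ) : losingTo S w w θ ℓ = ∅ :=
  Set.eq_empty_of_forall_notMem fun _ hf ↦ hf.1 rfl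

lemma compl_winningSamples_subset [Finite ι] (S : ι → Set Ω) (w : ι) (θ : ℝ) :
    (winningSamples S w ℓ)ᶜ ⊆
      {f | (hits (S w) f : ℝ) < θ} ∪ ⋃ x, losingTo S w x θ ℓ := by
  intro f hf
  simp only [winningSamples, Set.mem_compl_iff, Set.mem_ofPred_eq, not_forall, not_lt] at hf
  obtain ⟨z, hzw, hz⟩ := hf
  rcases lt_or_ge (hits (S w) f : ℝ) θ with h | h
  · exact Or.inl h
  obtain ⟨x, hxw, hx⟩ := Set.exists_max_image {y | y ≠ w} (fun y ↦ hits (S y) f)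
    (Set.toFinite _) ⟨z, hzw⟩
  exact Or.inr (Set.mem_iUnion.2 ⟨x, hxw, h, hz.trans (hx z hzw), hx⟩)

lemma prob_compl_winningSamples_le_add_sum [Finite Ω] [Fintype ι] (S : ι → Set Ω) (w : ι) (θ : ℝ) :
    prob (winningSamples S w ℓ)ᶜ ≤
      prob {f : Fin ℓ → Ω | (hits (S w) f : ℝ) < θ} + ∑ x, prob (losingTo S w x θ ℓ) :=
  (prob_mono (compl_winningSamples_subset S w θ)).trans
    ((prob_union_le _ _).trans (add_le_add_right (prob_iUnion_le _) _))

lemma four_div_mul_exp_neg_le {p L : ℝ} (hp : 0 < p) (hp1 : p ≤ 1) (hL : 64 ≤ L) :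
    4 / p * exp (-(L / (8 * p))) ≤ exp (-(L / 16)) := by
  set y := L / (16 * p) with hy
  have hLy : L / 16 ≤ y := by
    rw [hy, div_le_div_iff_of_pos_left (by linarith) (by norm_num) (by positivity)]
    linarith
  have hyexp : y ≤ exp y := by linarith [add_one_le_exp y]
  calc 4 / p * exp (-(L / (8 * p))) = 64 / L * (y * exp (-y)) * exp (-y) := by
        rw [mul_assoc, mul_assoc, ← exp_add, hy]
        field_simp
        ring_nf
    _ ≤ 1 * 1 * exp (-(L / 16)) := by
        gcongr
        · rw [div_le_one (by linarith)]; exact hL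
        · rw [exp_neg, ← div_eq_mul_inv, div_le_one (exp_pos y)]; exact hyexp
    _ = exp (-(L / 16)) := by ring

theorem prob_compl_winningSamples_le [Finite Ω] [Nonempty Ω] [Fintype ι] {S : ι → Set Ω} {w : ι}
    {ε k : ℝ} (hε : 0 < ε) (hεw : ε ≤ prob (S w)) (gap : ∀ x, x ≠ w → prob (S x) + ε ≤ prob (S w))
    (hk : 1 ≤ k) (hS : ∑ x, prob (S x) ≤ k) (hL : 64 ≤ ℓ * ε ^ 2) :
    prob (winningSamples S w ℓ)ᶜ ≤ k * exp (-(ℓ * ε ^ 2 / 32)) := by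
  set p := prob (S w)
  set L := ℓ * ε ^ 2 with hL'
  have hp0 : 0 < p := hε.trans_le hεw
  have hp1 : p ≤ 1 := prob_le_one _
  have hℓ : 0 < ℓ := Nat.pos_of_ne_zero fun h ↦ by norm_num [hL', h] at hL
  have hLp : L ≤ ℓ * p := by rw [hL']; gcongr; nlinarith
  have losing (x : ι) : prob (losingTo S w x (ℓ * p / 2) ℓ) ≤ prob (S x) * exp (-(L / 16)) := by
    rcases eq_or_ne x w with rfl | hx
    · rw [losingTo_self, prob_empty]
      exact mul_nonneg (prob_nonneg _) (exp_pos _).le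
    calc prob (losingTo S w x (ℓ * p / 2) ℓ)
        ≤ prob {f : Fin ℓ → Ω | hits (S w) f ≤ hits (S x) f ∧ ℓ * p / 2 ≤ hits (S x) f} :=
          prob_mono fun f ⟨_, hθ, hwx, _⟩ ↦ ⟨hwx, hθ.trans (by exact_mod_cast hwx)⟩
      _ ≤ 4 * (prob (S x) / p) * exp (-(L / (8 * p))) :=
          prob_hits_le_hits_le hℓ hε hεw (gap x hx)
      _ = prob (S x) * (4 / p * exp (-(L / (8 * p)))) := by ring
      _ ≤ prob (S x) * exp (-(L / 16)) :=
        mul_le_mul_of_nonneg_left (four_div_mul_exp_neg_le hp0 hp1 hL) (prob_nonneg _)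
  have half : 2 * exp (-(L / 32)) ≤ 1 := by
    rw [exp_neg, mul_inv_le_iff₀ (exp_pos _)]
    linarith [add_one_le_exp (L / 32)]
  calc prob (winningSamples S w ℓ)ᶜ
      ≤ prob {f : Fin ℓ → Ω | (hits (S w) f : ℝ) < ℓ * p / 2} +
          ∑ x, prob (losingTo S w x (ℓ * p / 2) ℓ) :=
        prob_compl_winningSamples_le_add_sum S w _
    _ ≤ exp (-(ℓ * p / 8)) + (∑ x, prob (S x)) * exp (-(L / 16)) := by
        rw [sum_mul]
        exact add_le_add (prob_hits_lt_half_le (S w)) (sum_le_sum fun x _ ↦ losing x)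
    _ ≤ k * exp (-(L / 16)) + k * exp (-(L / 16)) := by
        gcongr
        calc exp (-(ℓ * p / 8)) ≤ 1 * exp (-(L / 16)) := by rw [one_mul]; gcongr; linarith
          _ ≤ k * exp (-(L / 16)) := by gcongr
    _ = k * (2 * exp (-(L / 32))) * exp (-(L / 32)) := by
        rw [mul_assoc, mul_assoc, ← exp_add]; ring_nf
    _ ≤ k * 1 * exp (-(L / 32)) := by gcongr
    _ = k * exp (-(L / 32)) := by ring

lemma hits_update_add_indicator (U : Set Ω) (f : Fin ℓ → Ω) (j : Fin ℓ) (a : Ω) :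
    (hits U (Function.update f j a) : ℝ) + U.indicator 1 (f j) = hits U f + U.indicator 1 a := by
  rw [hits_eq_sum_indicator, hits_eq_sum_indicator, ← add_sum_erase _ _ (mem_univ j),
    ← add_sum_erase univ (fun i ↦ U.indicator (1 : Ω → ℝ) (f i)) (mem_univ j),
    sum_congr rfl fun i hi ↦ by rw [Function.update_of_ne (ne_of_mem_erase hi)],
    Function.update_self]
  ring

lemma hits_update_of_notMem {U : Set Ω} {f : Fin ℓ → Ω} {j : Fin ℓ} {a : Ω} (hj : f j ∉ U)
    (ha : a ∉ U) : hits U (Function.update f j a) = hits U f := by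
  simpa [hj, ha] using hits_update_add_indicator U f j a

lemma hits_update_of_mem {U : Set Ω} {f : Fin ℓ → Ω} {j : Fin ℓ} {a : Ω} (hj : f j ∉ U)
    (ha : a ∈ U) : hits U (Function.update f j a) = hits U f + 1 := by
  have := hits_update_add_indicator U f j a
  simp only [hj, ha, not_false_eq_true, Set.indicator_of_notMem, Set.indicator_of_mem,
    Pi.one_apply, add_zero] at this
  exact_mod_cast this

lemma hits_update_add_one {U : Set Ω} {f : Fin ℓ → Ω} {j : Fin ℓ} {a : Ω} (hj : f j ∈ U)
    (ha : a ∉ U) : hits U (Function.update f j a) + 1 = hits U f := by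
  have := hits_update_add_indicator U f j a
  simp only [hj, ha, not_false_eq_true, Set.indicator_of_notMem, Set.indicator_of_mem,
    Pi.one_apply, add_zero] at this
  exact_mod_cast this

lemma ncard_mul_le_of_exchange [Finite Ω] {S T : Set Ω} (disj : Disjoint S T)
    {A B : Set (Fin ℓ → Ω)} {t β : ℕ} (hA : ∀ f ∈ A, t ≤ hits S f) (hB : ∀ g ∈ B, hits T g ≤ β)
    (hAB : ∀ f ∈ A, ∀ j, f j ∈ S → ∀ a ∈ T, Function.update f j a ∈ B) :
    A.ncard * (t * T.ncard) ≤ B.ncard * (β * S.ncard) := by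
  classical
  have := Fintype.ofFinite Ω
  let r (f g : Fin ℓ → Ω) : Prop := ∃ j, f j ∈ S ∧ ∃ a ∈ T, g = Function.update f j a
  have degree_above (f) (hf : f ∈ A.toFinset) :
      t * T.ncard ≤ #(B.toFinset.bipartiteAbove r f) := by
    rw [Set.mem_toFinset] at hf
    refine (Nat.mul_le_mul_right _ (hA f hf)).trans ?_
    rw [hits, Set.ncard_eq_toFinset_card', Set.ncard_eq_toFinset_card' T, ← card_product]
    refine card_le_card_of_injOn (fun p ↦ Function.update f p.1 p.2) ?_ ?_
    · rintro ⟨j, a⟩ hja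
      simp only [coe_product, Set.coe_toFinset, Set.mem_prod, Set.mem_preimage] at hja
      simp only [mem_coe, mem_bipartiteAbove, Set.mem_toFinset]
      exact ⟨hAB f hf j hja.1 a hja.2, j, hja.1, a, hja.2, rfl⟩
    · rintro ⟨j, a⟩ hja ⟨i, b⟩ hib h
      simp only [coe_product, Set.coe_toFinset, Set.mem_prod, Set.mem_preimage] at hja hib h
      have hij : i = j := by
        by_contra hij
        have hj := congrFun h j
        rw [Function.update_self, Function.update_of_ne (Ne.symm hij)] at hj
        exact disj.notMem_of_mem_left hja.1 (hj ▸ hja.2)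
      subst hij
      simpa using congrFun h i
  have degree_below (g) (hg : g ∈ B.toFinset) :
      #(A.toFinset.bipartiteBelow r g) ≤ β * S.ncard := by
    rw [Set.mem_toFinset] at hg
    refine le_trans ?_ (Nat.mul_le_mul_right _ (hB g hg))
    rw [hits, Set.ncard_eq_toFinset_card', Set.ncard_eq_toFinset_card' S, ← card_product]
    refine card_le_card_of_surjOn (fun p ↦ Function.update g p.1 p.2) ?_
    intro f hf
    simp only [mem_coe, mem_bipartiteBelow] at hf
    obtain ⟨-, j, hj, a, ha, rfl⟩ := hf
    exact ⟨(j, f j), by simpa using ⟨ha, hj⟩, by simp⟩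
  simpa only [← Set.ncard_eq_toFinset_card'] using
    card_mul_le_card_mul r degree_above degree_below

lemma prob_mul_le_of_exchange [Finite Ω] {S T : Set Ω} (disj : Disjoint S T)
    {A B : Set (Fin ℓ → Ω)} {t β : ℕ} (hA : ∀ f ∈ A, t ≤ hits S f) (hB : ∀ g ∈ B, hits T g ≤ β)
    (hAB : ∀ f ∈ A, ∀ j, f j ∈ S → ∀ a ∈ T, Function.update f j a ∈ B) :
    prob A * (t * prob T) ≤ prob B * (β * prob S) := by
  have count : (A.ncard * (t * T.ncard) : ℝ) ≤ B.ncard * (β * S.ncard) := by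
    exact_mod_cast ncard_mul_le_of_exchange disj hA hB hAB
  calc prob A * (t * prob T)
      = A.ncard * (t * T.ncard) / (Nat.card (Fin ℓ → Ω) * Nat.card Ω) := by unfold prob; ring
    _ ≤ B.ncard * (β * S.ncard) / (Nat.card (Fin ℓ → Ω) * Nat.card Ω) := by gcongr
    _ = prob B * (β * prob S) := by unfold prob; ring

/-- The samples in `Q` that draw `a` times from `S` and `b` times from `T`. -/
def level (Q : Set (Fin ℓ → Ω)) (S T : Set Ω) (a b : ℕ) : Set (Fin ℓ → Ω) :=
  {f | f ∈ Q ∧ hits S f = a ∧ hits T f = b}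

open Nat in
lemma prob_level_mul_le [Finite Ω] {S T : Set Ω} (disj : Disjoint S T) {Q : Set (Fin ℓ → Ω)}
    (hQ : ∀ f ∈ Q, ∀ j, f j ∈ S → ∀ a ∈ T, Function.update f j a ∈ Q) (a b i : ℕ) :
    prob (level Q S T (a + i) b) * ((a + i)! * b ! * prob T ^ i) ≤
      prob (level Q S T a (b + i)) * (a ! * (b + i)! * prob S ^ i) := by
  induction i generalizing b with
  | zero => simp
  | succ i ih =>
    have hS := prob_nonneg S
    have hT := prob_nonneg T
    have exchange : prob (level Q S T (a + i + 1) b) * ((a + i + 1 : ℕ) * prob T) ≤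
        prob (level Q S T (a + i) (b + 1)) * ((b + 1 : ℕ) * prob S) := by
      refine prob_mul_le_of_exchange disj (fun f hf ↦ hf.2.1.ge) (fun g hg ↦ hg.2.2.le) ?_
      rintro f ⟨hfQ, hfS, hfT⟩ j hj c hc
      refine ⟨hQ f hfQ j hj c hc, ?_, ?_⟩
      · have := hits_update_add_one hj (disj.notMem_of_mem_right hc)
        lia
      · rw [hits_update_of_mem (disj.notMem_of_mem_left hj) hc, hfT]
    calc prob (level Q S T (a + (i + 1)) b) * ((a + (i + 1))! * b ! * prob T ^ (i + 1))
        = prob (level Q S T (a + i + 1) b) * ((a + i + 1 : ℕ) * prob T) *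
            ((a + i)! * b ! * prob T ^ i) := by
          rw [← add_assoc, factorial_succ]; push_cast; ring
      _ ≤ prob (level Q S T (a + i) (b + 1)) * ((b + 1 : ℕ) * prob S) *
            ((a + i)! * b ! * prob T ^ i) := by gcongr
      _ = prob (level Q S T (a + i) (b + 1)) * ((a + i)! * (b + 1)! * prob T ^ i) * prob S := by
          rw [factorial_succ]; push_cast; ring
      _ ≤ prob (level Q S T a (b + 1 + i)) * (a ! * (b + 1 + i)! * prob S ^ i) * prob S :=
          mul_le_mul_of_nonneg_right (ih (b + 1)) hS
      _ = prob (level Q S T a (b + (i + 1))) * (a ! * (b + (i + 1))! * prob S ^ (i + 1)) := by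
          rw [show b + (i + 1) = b + 1 + i by ring]; ring

lemma prob_level_le [Finite Ω] {S T : Set Ω} (disj : Disjoint S T) {Q : Set (Fin ℓ → Ω)}
    (hQ : ∀ f ∈ Q, ∀ j, f j ∈ S → ∀ a ∈ T, Function.update f j a ∈ Q) {r d c : ℕ} {κ : ℝ}
    (hT : 0 < prob T)
    (hκ : (c + r + d + r : ℝ) ^ r * prob S ^ (r + d) ≤ κ * ((c + 1) ^ r * prob T ^ (r + d))) :
    prob (level Q S T (c + r + d) (c + r)) ≤ κ * prob (level Q S T c (c + r + d + r)) := by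
  have hS := prob_nonneg S
  have hY : 0 ≤ prob (level Q S T c (c + r + d + r)) := prob_nonneg _
  have rise : ((c + r + d + r).factorial : ℝ) ≤ (c + r + d).factorial * (c + r + d + r) ^ r := by
    rw [← Nat.factorial_mul_ascFactorial]
    exact_mod_cast Nat.mul_le_mul_left _ (Nat.ascFactorial_le_pow_add _ _)
  have fall : (c.factorial * (c + 1) ^ r : ℝ) ≤ (c + r).factorial := by
    exact_mod_cast Nat.factorial_mul_pow_le_factorial
  have path := prob_level_mul_le disj hQ c (c + r) (r + d)
  rw [show c + (r + d) = c + r + d by ring, show c + r + (r + d) = c + r + d + r by ring] at path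
  set X := prob (level Q S T (c + r + d) (c + r))
  set Y := prob (level Q S T c (c + r + d + r))
  have hX : 0 ≤ X := prob_nonneg _
  have hpos : (0 : ℝ) < c.factorial * (c + r + d).factorial * ((c + 1) ^ r * prob T ^ (r + d)) := by
    positivity
  refine le_of_mul_le_mul_right ?_ hpos
  calc X * (c.factorial * (c + r + d).factorial * ((c + 1) ^ r * prob T ^ (r + d)))
      = X * ((c + r + d).factorial * (c.factorial * (c + 1) ^ r) * prob T ^ (r + d)) := by ring
    _ ≤ X * ((c + r + d).factorial * (c + r).factorial * prob T ^ (r + d)) := by gcongr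
    _ ≤ Y * (c.factorial * (c + r + d + r).factorial * prob S ^ (r + d)) := path
    _ ≤ Y * (c.factorial * ((c + r + d).factorial * (c + r + d + r) ^ r) * prob S ^ (r + d)) := by
        gcongr
    _ = Y * (c.factorial * (c + r + d).factorial) *
          ((c + r + d + r) ^ r * prob S ^ (r + d)) := by ring
    _ ≤ Y * (c.factorial * (c + r + d).factorial) *
          (κ * ((c + 1) ^ r * prob T ^ (r + d))) := by gcongr
    _ = κ * Y * (c.factorial * (c + r + d).factorial * ((c + 1) ^ r * prob T ^ (r + d))) := by ring

lemma prob_le_mul_of_fibers {α γ : Type*} [Finite α] {A B : Set α} {κ : ℝ} (p q : α → γ)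
    (h : ∀ c, prob (A ∩ p ⁻¹' {c}) ≤ κ * prob (B ∩ q ⁻¹' {c})) : prob A ≤ κ * prob B := by
  classical
  have := Fintype.ofFinite α
  have total (E : Set α) (r : α → γ) (t : Finset γ) (ht : ∀ a, r a ∈ t) :
      prob E = ∑ c ∈ t, prob (E ∩ r ⁻¹' {c}) := by
    simp_rw [prob_eq_expect_indicator, ← expect_sum_comm]
    refine expect_congr rfl fun a _ ↦ ?_
    by_cases ha : a ∈ E <;> simp [Set.indicator_apply, ha, ht]
  let t : Finset γ := univ.image p ∪ univ.image q
  rw [total A p t (by simp [t]), total B q t (by simp [t]), mul_sum]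
  exact sum_le_sum fun c _ ↦ h c

/-- The samples on which every candidate other than `w` and `x` scores at most `n`. -/
def othersAtMost (S : ι → Set Ω) (w x : ι) (n ℓ : ℕ) : Set (Fin ℓ → Ω) :=
  {g | ∀ y, y ≠ w → y ≠ x → hits (S y) g ≤ n}

lemma update_mem_othersAtMost {S : ι → Set Ω} (disj : Pairwise (Function.onFun Disjoint S))
    {w x : ι} {n : ℕ} {g : Fin ℓ → Ω} (hg : g ∈ othersAtMost S w x n ℓ) {j : Fin ℓ}
    (hj : g j ∈ S x) {a : Ω} (ha : a ∈ S w) :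
    Function.update g j a ∈ othersAtMost S w x n ℓ := by
  intro y hyw hyx
  rw [hits_update_of_notMem ((disj hyx).notMem_of_mem_right hj)
    ((disj hyw).notMem_of_mem_right ha)]
  exact hg y hyw hyx

lemma level_othersAtMost_subset_winningSamples {S : ι → Set Ω} {w x : ι} {n a b : ℕ}
    (ha : a < b) (hn : n < b) :
    level (othersAtMost S w x n ℓ) (S x) (S w) a b ⊆ winningSamples S w ℓ := by
  rintro g ⟨hg, hgx, hgw⟩ y hyw
  rcases eq_or_ne y x with rfl | hyx
  · rwa [hgx, hgw]
  · exact hgw ▸ (hg y hyw hyx).trans_lt hn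

/- With `a` votes for `x` and `b ≤ a` for `w`, turning `r + (a - b)` votes for `x` into votes for
`w` leaves `b - r` votes for `x` and `a + r` for `w`: now `w` wins, and `(a, b)` can be recovered
from the new scores. -/
lemma prob_losingTo_le [Finite Ω] {S : ι → Set Ω} (disj : Pairwise (Function.onFun Disjoint S))
    {w x : ι} (hw : 0 < prob (S w)) {θ κ : ℝ} {r : ℕ} (hr : 0 < r) (hrθ : r ≤ θ) (hκ0 : 0 ≤ κ)
    (hκ : ∀ c d : ℕ, θ ≤ c + r → (c + r + d + r : ℝ) ^ r * prob (S x) ^ (r + d) ≤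
      κ * ((c + 1) ^ r * prob (S w) ^ (r + d))) :
    prob (losingTo S w x θ ℓ) ≤ κ * prob (winningSamples S w ℓ) := by
  refine prob_le_mul_of_fibers (fun f ↦ (hits (S x) f, hits (S w) f))
    (fun g ↦ (hits (S w) g - r, hits (S x) g + r)) ?_
  rintro ⟨a, b⟩
  rcases Set.eq_empty_or_nonempty
    (losingTo S w x θ ℓ ∩ (fun f ↦ (hits (S x) f, hits (S w) f)) ⁻¹' {(a, b)}) with hE | hE
  · rw [hE, prob_empty]
    exact mul_nonneg hκ0 (prob_nonneg _)
  obtain ⟨f, ⟨hxw, hθ, hwx, -⟩, hf⟩ := hE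
  obtain ⟨rfl, rfl⟩ : hits (S x) f = a ∧ hits (S w) f = b := by simpa using hf
  obtain ⟨c, hc⟩ : ∃ c, hits (S w) f = c + r :=
    Nat.exists_eq_add_of_le' (by exact_mod_cast hrθ.trans hθ)
  obtain ⟨d, hd⟩ : ∃ d, hits (S x) f = c + r + d := Nat.exists_eq_add_of_le (hc ▸ hwx)
  rw [hc, hd]
  calc prob (losingTo S w x θ ℓ ∩ (fun f ↦ (hits (S x) f, hits (S w) f)) ⁻¹' {(c + r + d, c + r)})
      ≤ prob (level (othersAtMost S w x (c + r + d) ℓ) (S x) (S w) (c + r + d) (c + r)) := by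
        refine prob_mono ?_
        rintro g ⟨⟨-, -, -, htop⟩, hg⟩
        obtain ⟨hgx, hgw⟩ : hits (S x) g = c + r + d ∧ hits (S w) g = c + r := by simpa using hg
        exact ⟨fun y hyw _ ↦ hgx ▸ htop y hyw, hgx, hgw⟩
    _ ≤ κ * prob (level (othersAtMost S w x (c + r + d) ℓ) (S x) (S w) c (c + r + d + r)) :=
        prob_level_le (disj hxw) (fun _ hg _ hj _ ha ↦ update_mem_othersAtMost disj hg hj ha) hw
          (hκ c d (by exact_mod_cast hc ▸ hθ))
    _ ≤ _ := by
        refine mul_le_mul_of_nonneg_left (prob_mono ?_) hκ0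
        exact fun g hg ↦ ⟨level_othersAtMost_subset_winningSamples (by lia) (by lia) hg,
          by simp [hg.2.1, hg.2.2]⟩

lemma prob_losingTo_le_of_gap [Finite Ω] {S : ι → Set Ω}
    (disj : Pairwise (Function.onFun Disjoint S)) {w x : ι} {ε : ℝ} (hw : 0 < prob (S w))
    (gap : prob (S x) + ε ≤ prob (S w)) {θ κ : ℝ} {r : ℕ} (hr : 0 < r) (hrθ : r ≤ θ)
    (hκ0 : 0 ≤ κ) (hκ : ∀ c d : ℕ, θ ≤ c + r →
      (c + r + d + r : ℝ) ^ r * (1 - ε / prob (S w)) ^ (r + d - 1) ≤ κ * (c + 1) ^ r) :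
    prob (losingTo S w x θ ℓ) ≤ κ / prob (S w) * prob (S x) * prob (winningSamples S w ℓ) := by
  set p := prob (S w)
  refine prob_losingTo_le disj hw hr hrθ (mul_nonneg (by positivity) (prob_nonneg _)) ?_
  intro c d hc
  obtain ⟨n, hn⟩ : ∃ n, r + d = n + 1 := ⟨r + d - 1, by lia⟩
  have hx0 := prob_nonneg (S x)
  have hxu : prob (S x) ≤ (1 - ε / p) * p := by
    rw [sub_mul, div_mul_cancel₀ _ hw.ne']; linarith
  have numeric := hκ c d hc
  rw [hn, Nat.add_sub_cancel] at numeric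
  calc (c + r + d + r : ℝ) ^ r * prob (S x) ^ (r + d)
      = (c + r + d + r : ℝ) ^ r * (prob (S x) ^ n * prob (S x)) := by rw [hn, pow_succ]
    _ ≤ (c + r + d + r : ℝ) ^ r * (((1 - ε / p) * p) ^ n * prob (S x)) := by gcongr
    _ = (c + r + d + r : ℝ) ^ r * (1 - ε / p) ^ n * (p ^ n * prob (S x)) := by
        rw [mul_pow]; ring
    _ ≤ κ * (c + 1) ^ r * (p ^ n * prob (S x)) := by gcongr
    _ = κ / p * prob (S x) * ((c + 1) ^ r * p ^ (r + d)) := by rw [hn]; field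

lemma one_le_prob_low_add_mul_prob_winningSamples [Finite Ω] [Nonempty Ω] [Fintype ι]
    {S : ι → Set Ω} (disj : Pairwise (Function.onFun Disjoint S)) (hS : ∑ x, prob (S x) ≤ 1)
    {w : ι} {ε : ℝ} (hw : 0 < prob (S w)) (gap : ∀ x, x ≠ w → prob (S x) + ε ≤ prob (S w))
    {θ κ : ℝ} {r : ℕ} (hr : 0 < r) (hrθ : r ≤ θ) (hκ0 : 0 ≤ κ)
    (hκ : ∀ c d : ℕ, θ ≤ c + r →
      (c + r + d + r : ℝ) ^ r * (1 - ε / prob (S w)) ^ (r + d - 1) ≤ κ * (c + 1) ^ r) :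
    1 ≤ prob {f : Fin ℓ → Ω | (hits (S w) f : ℝ) < θ} +
      (1 + κ / prob (S w)) * prob (winningSamples S w ℓ) := by
  set p := prob (S w)
  set W := prob (winningSamples S w ℓ)
  have hW : 0 ≤ W := prob_nonneg _
  have losing (x : ι) : prob (losingTo S w x θ ℓ) ≤ κ / p * prob (S x) * W := by
    rcases eq_or_ne x w with rfl | hx
    · rw [losingTo_self, prob_empty]
      positivity
    · exact prob_losingTo_le_of_gap disj hw (gap x hx) hr hrθ hκ0 hκ
  have total : ∑ x, prob (losingTo S w x θ ℓ) ≤ κ / p * W :=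
    calc ∑ x, prob (losingTo S w x θ ℓ) ≤ κ / p * (∑ x, prob (S x)) * W := by
          rw [mul_sum, sum_mul]
          exact sum_le_sum fun x _ ↦ losing x
      _ ≤ κ / p * 1 * W := by gcongr
      _ = κ / p * W := by ring
  linarith [prob_compl (winningSamples S w ℓ),
    prob_compl_winningSamples_le_add_sum (ℓ := ℓ) S w θ]

lemma add_two_mul_one_sub_pow_le {u : ℝ} (hu : 0 < u) (hu1 : u ≤ 1) (c d : ℕ) :
    (c + d + 2) * (1 - u) ^ d ≤ 2 / u * (c + 1) := by
  have : 0 ≤ 1 - u := sub_nonneg.2 hu1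
  have bernoulli : (1 + d * u) * (1 - u) ^ d ≤ 1 :=
    calc (1 + d * u) * (1 - u) ^ d ≤ (1 + u) ^ d * (1 - u) ^ d := by
          gcongr
          exact one_add_mul_le_pow (by linarith) d
      _ = (1 - u ^ 2) ^ d := by rw [← mul_pow]; ring
      _ ≤ 1 := pow_le_one₀ (by nlinarith) (by nlinarith)
  have hcd : (c + d + 2 : ℝ) * u ≤ 2 * (c + 1) * (1 + d * u) := by
    have : (0 : ℝ) ≤ c * (d * u) := by positivity
    have : (0 : ℝ) ≤ d * u := by positivity
    have : (c : ℝ) * u ≤ c * 1 := by gcongr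
    linarith
  rw [div_mul_eq_mul_div, le_div_iff₀ hu]
  calc (c + d + 2) * (1 - u) ^ d * u = (c + d + 2) * u * (1 - u) ^ d := by ring
    _ ≤ 2 * (c + 1) * (1 + d * u) * (1 - u) ^ d := by gcongr
    _ = 2 * (c + 1) * ((1 + d * u) * (1 - u) ^ d) := by ring
    _ ≤ 2 * (c + 1) * 1 := by gcongr
    _ = 2 * (c + 1) := by ring

lemma add_pow_le_exp_mul_pow {a b : ℝ} (ha : 0 < a) (hab : 0 ≤ a + b) (n : ℕ) :
    (a + b) ^ n ≤ exp (n / a * b) * a ^ n :=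
  calc (a + b) ^ n ≤ (exp (b / a) * a) ^ n := by
        gcongr
        calc a + b = (b / a + 1) * a := by field
          _ ≤ exp (b / a) * a := by gcongr; exact add_one_le_exp _
    _ = exp (n / a * b) * a ^ n := by rw [mul_pow, ← exp_nat_mul]; ring_nf

lemma pow_mul_one_sub_pow_le {u : ℝ} (hu : 0 ≤ u) (hu1 : u ≤ 1) {r : ℕ} (hr : 0 < r) {c : ℕ}
    (hrc : 8 * r ≤ u * (c + r)) (d : ℕ) :
    (c + r + d + r : ℝ) ^ r * (1 - u) ^ (r + d - 1) ≤ 3 * exp (-(u * r / 2)) * (c + 1) ^ r := by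
  have hr' : (1 : ℝ) ≤ r := by exact_mod_cast hr
  have hc : (0 : ℝ) < c + 1 := by positivity
  have ratio : r / (c + 1) ≤ u / 7 := by
    rw [div_le_div_iff₀ hc (by norm_num)]; nlinarith
  have growth : (c + r + d + r : ℝ) ^ r ≤ exp (u / 7 * (2 * r + d - 1)) * (c + 1) ^ r := by
    have : (0 : ℝ) ≤ d := by positivity
    calc (c + r + d + r : ℝ) ^ r = (c + 1 + (2 * r + d - 1)) ^ r := by ring
      _ ≤ exp (r / (c + 1) * (2 * r + d - 1)) * (c + 1) ^ r :=
          add_pow_le_exp_mul_pow hc (by linarith) r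
      _ ≤ exp (u / 7 * (2 * r + d - 1)) * (c + 1) ^ r := by
          gcongr
          linarith
  have decay : (1 - u) ^ (r + d - 1) ≤ exp (-(u * (r + d - 1))) := by
    calc (1 - u) ^ (r + d - 1) ≤ exp (-u) ^ (r + d - 1) := by
          have := sub_nonneg.2 hu1
          gcongr
          exact one_sub_le_exp_neg u
      _ = exp (-(u * (r + d - 1))) := by
          rw [← exp_nat_mul, Nat.cast_sub (by lia)]; push_cast; ring_nf
  have exponent : u / 7 * (2 * r + d - 1) + -(u * (r + d - 1)) ≤ 1 + -(u * r / 2) := by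
    have : 0 ≤ u * d := by positivity
    have : 0 ≤ u * r := by positivity
    linarith
  calc (c + r + d + r : ℝ) ^ r * (1 - u) ^ (r + d - 1)
      ≤ exp (u / 7 * (2 * r + d - 1)) * (c + 1) ^ r * exp (-(u * (r + d - 1))) := by
        have := sub_nonneg.2 hu1
        gcongr
    _ = exp (u / 7 * (2 * r + d - 1) + -(u * (r + d - 1))) * (c + 1) ^ r := by
        rw [exp_add]; ring
    _ ≤ exp (1 + -(u * r / 2)) * (c + 1) ^ r := by gcongr
    _ ≤ 3 * exp (-(u * r / 2)) * (c + 1) ^ r := by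
        rw [exp_add]
        gcongr
        linarith [exp_one_lt_d9]

lemma exp_neg_le_inv {x : ℝ} (hx : 0 < x) : exp (-x) ≤ x⁻¹ := by
  rw [exp_neg]
  exact inv_anti₀ hx (by linarith [add_one_le_exp x])

lemma exp_neg_le_one_sub_div_three {x : ℝ} (hx : 0 ≤ x) (hx2 : x ≤ 2) :
    exp (-x) ≤ 1 - x / 3 := by
  rw [exp_neg]
  refine (inv_anti₀ (by linarith) (add_one_le_exp x)).trans ?_
  rw [inv_le_iff_one_le_mul₀ (by linarith)]
  nlinarith

lemma prob_hits_lt_one_le [Finite Ω] [Nonempty Ω] {S : Set Ω} (h : 0 < ℓ * prob S) :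
    prob {f : Fin ℓ → Ω | (hits S f : ℝ) < 1} ≤ exp (-(ℓ * prob S / 8)) := by
  refine (prob_mono fun f hf ↦ ?_).trans (prob_hits_lt_half_le S)
  have : hits S f = 0 := by simpa using hf
  simpa [this] using h

lemma prob_hits_lt_half_le_half [Finite Ω] [Nonempty Ω] {S : Set Ω} (h : 16 ≤ ℓ * prob S) :
    prob {f : Fin ℓ → Ω | (hits S f : ℝ) < ℓ * prob S / 2} ≤ 1 / 2 :=
  calc prob {f : Fin ℓ → Ω | (hits S f : ℝ) < ℓ * prob S / 2}
      ≤ exp (-(ℓ * prob S / 8)) := prob_hits_lt_half_le S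
    _ ≤ (ℓ * prob S / 8)⁻¹ := exp_neg_le_inv (by linarith)
    _ ≤ 1 / 2 := by rw [one_div]; exact inv_anti₀ two_pos (by linarith)

section Plurality

variable [Finite Ω] [Nonempty Ω] [Fintype ι] {S : ι → Set Ω} {w : ι} {ε : ℝ}

lemma le_prob_winningSamples_of_lt (disj : Pairwise (Function.onFun Disjoint S))
    (hS : ∑ x, prob (S x) ≤ 1) (hℓ : 0 < ℓ) (hε : 0 < ε) (hεw : ε ≤ prob (S w))
    (gap : ∀ x, x ≠ w → prob (S x) + ε ≤ prob (S w)) (few : ℓ * ε < 16) :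
    ℓ * ε ^ 2 / 72 ≤ prob (winningSamples S w ℓ) := by
  have hp : 0 < prob (S w) := hε.trans_le hεw
  have hε1 : ε ≤ 1 := hεw.trans (prob_le_one _)
  have : (0 : ℝ) < ℓ := by exact_mod_cast hℓ
  have split := one_le_prob_low_add_mul_prob_winningSamples (ℓ := ℓ) disj hS hp gap
    (θ := 1) (κ := 2 / (ε / prob (S w))) one_pos (by simp) (by positivity) fun c d _ ↦ by
      have := add_two_mul_one_sub_pow_le (div_pos hε hp) ((div_le_one hp).2 hεw) c d
      rw [Nat.add_sub_cancel_left, pow_one, pow_one]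
      push_cast
      convert this using 2
      ring
  rw [show 2 / (ε / prob (S w)) / prob (S w) = 2 / ε by field] at split
  set W := prob (winningSamples S w ℓ)
  set y := ℓ * ε / 8 with hy
  have hy0 : 0 < y := by positivity
  have low : prob {f : Fin ℓ → Ω | (hits (S w) f : ℝ) < 1} ≤ 1 - y / 3 :=
    calc prob {f : Fin ℓ → Ω | (hits (S w) f : ℝ) < 1} ≤ exp (-(ℓ * prob (S w) / 8)) :=
          prob_hits_lt_one_le (by positivity)
      _ ≤ exp (-y) := by rw [hy]; gcongr
      _ ≤ 1 - y / 3 := exp_neg_le_one_sub_div_three hy0.le (by linarith)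
  have bound : y / 3 ≤ 3 / ε * W :=
    calc y / 3 ≤ (1 + 2 / ε) * W := by linarith
      _ ≤ 3 / ε * W := by
          have : 0 ≤ W := prob_nonneg _
          gcongr
          rw [show (3 : ℝ) / ε = 1 / ε + 2 / ε by ring]
          gcongr
          rwa [one_le_div hε]
  calc ℓ * ε ^ 2 / 72 = y / 3 * (ε / 3) := by rw [hy]; ring
    _ ≤ 3 / ε * W * (ε / 3) := by gcongr
    _ = W := by field

/- Exchanging `r ≈ ℓ * ε / 16` votes beyond those needed for a tie makes the losing samples rarer
by a factor `3 * exp (-ε * r / (2 * p))`, which absorbs the factor `1 / p` of the union bound. -/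
lemma le_prob_winningSamples_of_le (disj : Pairwise (Function.onFun Disjoint S))
    (hS : ∑ x, prob (S x) ≤ 1) (hε : 0 < ε) (hεw : ε ≤ prob (S w))
    (gap : ∀ x, x ≠ w → prob (S x) + ε ≤ prob (S w)) (many : 16 ≤ ℓ * ε)
    (hL : ℓ * ε ^ 2 ≤ 64) :
    ℓ * ε ^ 2 / 512 ≤ prob (winningSamples S w ℓ) := by
  set p := prob (S w)
  have hp : 0 < p := hε.trans_le hεw
  have hℓ : (0 : ℝ) < ℓ := pos_of_mul_pos_left (by linarith) hε.le
  set u := ε / p with hu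
  have hu0 : 0 < u := by positivity
  have hu1 : u ≤ 1 := (div_le_one hp).2 hεw
  set L := ℓ * ε ^ 2 with hL'
  have hL0 : 0 < L := by positivity
  set r := ⌊ℓ * ε / 16⌋₊
  have hr : 0 < r := Nat.floor_pos.2 (by linarith)
  have hrle : (r : ℝ) ≤ ℓ * ε / 16 := Nat.floor_le (by linarith)
  have hrge : ℓ * ε / 32 ≤ r := by linarith [Nat.div_two_lt_floor (a := ℓ * ε / 16) (by linarith)]
  have hθ : ℓ * ε = u * (ℓ * p) := by rw [hu]; field
  have low : prob {f : Fin ℓ → Ω | (hits (S w) f : ℝ) < ℓ * p / 2} ≤ 1 / 2 :=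
    prob_hits_lt_half_le_half (by nlinarith)
  have split := one_le_prob_low_add_mul_prob_winningSamples (ℓ := ℓ) disj hS hp gap
    (θ := ℓ * p / 2) (κ := 3 * exp (-(u * r / 2))) hr (by nlinarith) (by positivity)
    fun c d hc ↦ pow_mul_one_sub_pow_le hu0.le hu1 hr (by nlinarith) d
  have factor : 3 * exp (-(u * r / 2)) / p ≤ 192 / L :=
    calc 3 * exp (-(u * r / 2)) / p ≤ 3 * (u * (ℓ * ε / 32) / 2)⁻¹ / p := by
          gcongr
          exact (exp_neg_le_inv (by positivity)).trans (by gcongr)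
      _ = 192 / L := by rw [hL', hu]; field
  set W := prob (winningSamples S w ℓ)
  have hW : 0 ≤ W := prob_nonneg _
  have half : 1 / 2 ≤ 256 / L * W :=
    calc 1 / 2 ≤ (1 + 192 / L) * W := by
          have : 3 * exp (-(u * r / 2)) / p * W ≤ 192 / L * W := by gcongr
          linarith
      _ ≤ 256 / L * W := by
          gcongr
          rw [show 256 / L = 64 / L + 192 / L by ring]
          gcongr
          rwa [one_le_div hL0]
  calc L / 512 = 1 / 2 * (L / 256) := by ring
    _ ≤ 256 / L * W * (L / 256) := by gcongr
    _ = W := by field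

lemma le_prob_winningSamples (disj : Pairwise (Function.onFun Disjoint S))
    (hS : ∑ x, prob (S x) ≤ 1) (hℓ : 0 < ℓ) (hε : 0 < ε) (hεw : ε ≤ prob (S w))
    (gap : ∀ x, x ≠ w → prob (S x) + ε ≤ prob (S w)) (hL : ℓ * ε ^ 2 ≤ 64) :
    ℓ * ε ^ 2 / 512 ≤ prob (winningSamples S w ℓ) := by
  rcases lt_or_ge (ℓ * ε) 16 with few | many
  · calc ℓ * ε ^ 2 / 512 ≤ ℓ * ε ^ 2 / 72 := by gcongr; norm_num
      _ ≤ _ := le_prob_winningSamples_of_lt disj hS hℓ hε hεw gap few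
  · exact le_prob_winningSamples_of_le disj hS hε hεw gap many hL

end Plurality

lemma sum_prob_le [Finite Ω] [Fintype ι] {S : ι → Set Ω} {k : ℕ}
    (approves : ∀ a, {x | a ∈ S x}.ncard ≤ k) : ∑ x, prob (S x) ≤ k := by
  classical
  have := Fintype.ofFinite Ω
  have count (a : Ω) : ∑ x, (S x).indicator (1 : Ω → ℝ) a = {x | a ∈ S x}.ncard := by
    rw [Set.ncard_eq_toFinset_card']
    simp [Set.indicator_apply]
  rcases isEmpty_or_nonempty Ω with hΩ | hΩ
  · simp [prob]
  · simp_rw [prob_eq_expect_indicator, ← expect_sum_comm, count]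
    exact expect_le univ_nonempty fun a _ ↦ by exact_mod_cast approves a

lemma pairwise_disjoint_of_ncard_le_one [Finite ι] {S : ι → Set Ω}
    (approves : ∀ a, {x | a ∈ S x}.ncard ≤ 1) : Pairwise (Function.onFun Disjoint S) := by
  intro x y hxy
  refine Set.disjoint_left.2 fun a hx hy ↦ hxy ?_
  exact (Set.ncard_le_one (Set.toFinite _)).1 (approves a) x hx y hy

theorem one_sub_le_prob_winningSamples [Finite Ω] [Nonempty Ω] [Finite ι] {S : ι → Set Ω} {w : ι}
    {k : ℕ} (approves : ∀ a, {x | a ∈ S x}.ncard ≤ k) {ε δ : ℝ} (hε : 0 < ε)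
    (hεw : ε ≤ prob (S w)) (gap : ∀ x, x ≠ w → prob (S x) + ε ≤ prob (S w)) (hδ : 0 < δ)
    (hδ1 : δ < 1) (hL : 512 * log (k / δ) ≤ ℓ * ε ^ 2) :
    1 - δ ≤ prob (winningSamples S w ℓ) := by
  have := Fintype.ofFinite ι
  have hk0 : 0 < k := by
    obtain ⟨a, ha⟩ := nonempty_of_prob_pos (hε.trans_le hεw)
    exact ((Set.ncard_pos (Set.toFinite _)).2 ⟨w, ha⟩).trans_le (approves a)
  have hk : (1 : ℝ) ≤ k := by exact_mod_cast hk0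
  have hkδ : k < k / δ := by rw [lt_div_iff₀ hδ]; nlinarith
  have hlog : 0 < log (k / δ) := log_pos (hk.trans_lt hkδ)
  rcases le_or_gt 64 (ℓ * ε ^ 2) with large | small
  · have lose : prob (winningSamples S w ℓ)ᶜ ≤ δ :=
      calc prob (winningSamples S w ℓ)ᶜ ≤ k * exp (-(ℓ * ε ^ 2 / 32)) :=
            prob_compl_winningSamples_le hε hεw gap hk (sum_prob_le approves) large
        _ ≤ k * exp (-log (k / δ)) := by gcongr; linarith
        _ = δ := by rw [exp_neg, exp_log (by positivity)]; field
    linarith [prob_compl (winningSamples S w ℓ)]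
  · obtain rfl : k = 1 := by
      by_contra hk1
      have hk2 : (2 : ℝ) ≤ k := by exact_mod_cast (show 2 ≤ k by lia)
      linarith [log_le_log two_pos (hk2.trans hkδ.le), log_two_gt_d9]
    rw [Nat.cast_one, one_div, log_inv] at hL hlog
    have hℓ : 0 < ℓ := Nat.pos_of_ne_zero fun h ↦ by
      rw [h, Nat.cast_zero, zero_mul] at hL
      linarith
    calc 1 - δ ≤ ℓ * ε ^ 2 / 512 := by linarith [log_le_sub_one_of_pos hδ]
      _ ≤ prob (winningSamples S w ℓ) :=
        le_prob_winningSamples (pairwise_disjoint_of_ncard_le_one approves)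
          (by exact_mod_cast sum_prob_le approves) hℓ hε hεw gap small.le

lemma pos_of_mem_winningSamples {S : ι → Set Ω} {w x : ι} (hx : x ≠ w) {s : Fin ℓ → Ω}
    (hs : s ∈ winningSamples S w ℓ) : 0 < ℓ := by
  obtain ⟨j, -⟩ := Set.nonempty_of_ncard_ne_zero (Nat.ne_zero_of_lt (hs x hx))
  exact j.pos

end Sampling

section Election

variable {m n k : ℕ}

/-- The voters ranking the candidate `x` among their top `k`. -/
def approvers (k : ℕ) (V : Fin n → Equiv.Perm (Fin m)) (x : Fin m) : Set (Fin n) :=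
  {i | (V i x : ℕ) < k}

lemma kApprovalScore_eq_ncard (V : Fin n → Equiv.Perm (Fin m)) (x : Fin m) :
    kApprovalScore k V x = (approvers k V x).ncard := rfl

lemma kApprovalScore_comp_eq_hits {ℓ : ℕ} (V : Fin n → Equiv.Perm (Fin m)) (s : Fin ℓ → Fin n)
    (x : Fin m) : kApprovalScore k (fun j ↦ V (s j)) x = hits (approvers k V x) s := rfl

lemma ncard_mem_approvers_le (V : Fin n → Equiv.Perm (Fin m)) (i : Fin n) :
    {x | i ∈ approvers k V x}.ncard ≤ k := by
  have top : ∀ x ∈ {x | i ∈ approvers k V x}, (V i x : ℕ) ∈ (range k : Set ℕ) :=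
    fun _ hx ↦ mem_coe.2 (mem_range.2 hx)
  simpa only [Set.ncard_coe_finset, card_range] using
    Set.ncard_le_ncard_of_injOn (fun x ↦ (V i x : ℕ)) top
      (Fin.val_injective.comp (V i).injective).injOn

open Classical in
/-- The profile in which the voters in `T` exchange the positions of `w` and `x`. -/
noncomputable def swapVotes (V : Fin n → Equiv.Perm (Fin m)) (w x : Fin m) (T : Set (Fin n)) :
    Fin n → Equiv.Perm (Fin m) :=
  fun i ↦ if i ∈ T then (Equiv.swap w x).trans (V i) else V i

lemma ncard_swapVotes_ne_le (V : Fin n → Equiv.Perm (Fin m)) (w x : Fin m) (T : Set (Fin n)) :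
    {i | swapVotes V w x T i ≠ V i}.ncard ≤ T.ncard :=
  Set.ncard_le_ncard fun i hi ↦ by_contra fun hT ↦ hi (if_neg hT)

lemma approvers_swapVotes_left {V : Fin n → Equiv.Perm (Fin m)} {w x : Fin m} {T : Set (Fin n)}
    (hT : T ⊆ approvers k V w \ approvers k V x) :
    approvers k (swapVotes V w x T) w = approvers k V w \ T := by
  ext i
  by_cases hi : i ∈ T
  · simpa [approvers, swapVotes, hi] using (hT hi).2
  · simp [approvers, swapVotes, hi]

lemma approvers_swapVotes_right {V : Fin n → Equiv.Perm (Fin m)} {w x : Fin m} {T : Set (Fin n)}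
    (hT : T ⊆ approvers k V w \ approvers k V x) :
    approvers k (swapVotes V w x T) x = approvers k V x ∪ T := by
  ext i
  by_cases hi : i ∈ T
  · simpa [approvers, swapVotes, hi] using (hT hi).1
  · simp [approvers, swapVotes, hi]

lemma kApprovalScore_swapVotes_le {V : Fin n → Equiv.Perm (Fin m)} {w x : Fin m} {T : Set (Fin n)}
    (hT : T ⊆ approvers k V w \ approvers k V x)
    (hTcard : kApprovalScore k V w ≤ kApprovalScore k V x + T.ncard) :
    kApprovalScore k (swapVotes V w x T) w ≤ kApprovalScore k (swapVotes V w x T) x :=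
  calc kApprovalScore k (swapVotes V w x T) w = kApprovalScore k V w - T.ncard := by
        rw [kApprovalScore_eq_ncard, approvers_swapVotes_left hT,
          Set.ncard_sdiff (hT.trans Set.sdiff_subset), kApprovalScore_eq_ncard]
    _ ≤ kApprovalScore k V x := Nat.sub_le_iff_le_add.2 hTcard
    _ ≤ (approvers k V x ∪ T).ncard := Set.ncard_le_ncard Set.subset_union_left
    _ = kApprovalScore k (swapVotes V w x T) x := by
        rw [kApprovalScore_eq_ncard, approvers_swapVotes_right hT]

lemma kApprovalScore_add_le_of_margin {V : Fin n → Equiv.Perm (Fin m)} {w x : Fin m} {M : ℝ}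
    (hxw : kApprovalScore k V x ≤ kApprovalScore k V w)
    (margin : ∀ V' : Fin n → Equiv.Perm (Fin m), kApprovalScore k V' w ≤ kApprovalScore k V' x →
      M ≤ Nat.card {i // V' i ≠ V i}) :
    kApprovalScore k V x + M ≤ kApprovalScore k V w := by
  obtain ⟨T, hT, hTcard⟩ := Set.exists_subset_card_eq
    (Set.le_ncard_sdiff (approvers k V x) (approvers k V w))
  rw [← kApprovalScore_eq_ncard, ← kApprovalScore_eq_ncard] at hTcard
  have changed : M ≤ (kApprovalScore k V w - kApprovalScore k V x : ℕ) :=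
    (margin _ (kApprovalScore_swapVotes_le hT (by lia))).trans
      (by exact_mod_cast hTcard ▸ ncard_swapVotes_ne_le V w x T)
  rw [Nat.cast_sub hxw] at changed
  linarith

lemma prob_approvers_add_le {V : Fin n → Equiv.Perm (Fin m)} {w x : Fin m} {ε : ℝ} (hn : 0 < n)
    (h : kApprovalScore k V x + ε * n ≤ kApprovalScore k V w) :
    prob (approvers k V x) + ε ≤ prob (approvers k V w) := by
  have : (0 : ℝ) < n := by exact_mod_cast hn
  rw [prob, prob, Nat.card_fin, div_add' _ _ _ this.ne', ← kApprovalScore_eq_ncard,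
    ← kApprovalScore_eq_ncard]
  gcongr

lemma setOf_empiricalScore_lt_eq_winningSamples {ℓ : ℕ} (hn : 0 < n) (hℓ : 0 < ℓ)
    (V : Fin n → Equiv.Perm (Fin m)) (w : Fin m) :
    {s : Fin ℓ → Fin n | ∀ x, x ≠ w → (n : ℝ) / ℓ * kApprovalScore k (fun j ↦ V (s j)) x <
      (n : ℝ) / ℓ * kApprovalScore k (fun j ↦ V (s j)) w} =
      winningSamples (approvers k V) w ℓ := by
  have : (0 : ℝ) < n / ℓ := by positivity
  simp only [winningSamples, kApprovalScore_comp_eq_hits, mul_lt_mul_iff_right₀ this, Nat.cast_lt]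

lemma mul_pow_le_card_of_le_prob {ℓ : ℕ} {P : (Fin ℓ → Fin n) → Prop} {c : ℝ}
    (h : c ≤ prob {s | P s}) : c * (n : ℝ) ^ ℓ ≤ Nat.card {s // P s} := by
  refine mul_le_of_le_div₀ (by positivity) (by positivity) (h.trans_eq ?_)
  rw [prob, Nat.card_fun, Nat.card_fin, Nat.card_fin, Nat.cast_pow]
  rfl

theorem one_sub_le_prob_empiricalScore_lt {V : Fin n → Equiv.Perm (Fin m)} {w x₀ : Fin m}
    {ε δ : ℝ} {ℓ : ℕ} (hε : 0 < ε) (hδ : 0 < δ) (hδ1 : δ < 1) (hx₀ : x₀ ≠ w)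
    (hw : 0 < kApprovalScore k V w)
    (gap : ∀ x, x ≠ w → kApprovalScore k V x + ε * n ≤ kApprovalScore k V w)
    (hL : 512 * log (k / δ) ≤ ℓ * ε ^ 2) :
    1 - δ ≤ prob {s : Fin ℓ → Fin n | ∀ x, x ≠ w →
      (n : ℝ) / ℓ * kApprovalScore k (fun j ↦ V (s j)) x <
        (n : ℝ) / ℓ * kApprovalScore k (fun j ↦ V (s j)) w} := by
  obtain ⟨i, -⟩ := Set.nonempty_of_ncard_ne_zero hw.ne'
  have : Nonempty (Fin n) := ⟨i⟩
  have prob_gap (x) (hx : x ≠ w) := prob_approvers_add_le i.pos (gap x hx)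
  have win : 1 - δ ≤ prob (winningSamples (approvers k V) w ℓ) :=
    one_sub_le_prob_winningSamples (ncard_mem_approvers_le V) hε
      (by linarith [prob_gap x₀ hx₀, prob_nonneg (approvers k V x₀)]) prob_gap hδ hδ1 hL
  obtain ⟨s, hs⟩ := nonempty_of_prob_pos ((sub_pos.2 hδ1).trans_le win)
  rwa [setOf_empiricalScore_lt_eq_winningSamples i.pos (pos_of_mem_winningSamples hx₀ hs)]

end Election

end KApproval

/-- Sample complexity O(log(k/δ)/ε²) for winner determination under the k-approval
voting rule: if the margin of victory is at least εn with unique winner w and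
ℓ ≥ K·ln(k/δ)/ε², then on at least a (1-δ) fraction of the n^ℓ equiprobable tuples
of ℓ i.i.d. uniform vote samples, w is the unique maximizer of the empirical
k-approval score (n/ℓ)·(number of sampled votes ranking the candidate in the top k).
In particular the bound is independent of m, and for plurality (k = 1) it is
independent of both m and n. -/
theorem kapproval_sample_complexity :
    ∃ K : ℝ, 0 < K ∧
      ∀ (m n k : ℕ) (ε δ : ℝ), 0 < ε → ε < 1 → 0 < δ → δ < 1 →
      ∀ (V : Fin n → Equiv.Perm (Fin m)) (w : Fin m),
        (∀ x : Fin m, x ≠ w → kApprovalScore k V x < kApprovalScore k V w) →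
        (∀ V' : Fin n → Equiv.Perm (Fin m),
          (∃ x : Fin m, x ≠ w ∧ kApprovalScore k V' w ≤ kApprovalScore k V' x) →
          ε * n ≤ (Nat.card {i : Fin n // V' i ≠ V i} : ℝ)) →
        ∀ ℓ : ℕ, K * Real.log ((k : ℝ) / δ) / ε ^ 2 ≤ ℓ →
          (1 - δ) * (n : ℝ) ^ ℓ ≤
            (Nat.card {s : Fin ℓ → Fin n // ∀ x : Fin m, x ≠ w →
              (n : ℝ) / ℓ * (kApprovalScore k (fun j => V (s j)) x : ℝ)
                < (n : ℝ) / ℓ * (kApprovalScore k (fun j => V (s j)) w : ℝ)} : ℝ) := by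
  refine ⟨512, by norm_num, fun m n k ε δ hε _ hδ hδ1 V w winner margin ℓ hℓ ↦ ?_⟩
  by_cases hw : ∃ x, x ≠ w
  · obtain ⟨x₀, hx₀⟩ := hw
    have gap (x) (hx : x ≠ w) : kApprovalScore k V x + ε * n ≤ kApprovalScore k V w :=
      KApproval.kApprovalScore_add_le_of_margin (winner x hx).le fun V' h ↦ margin V' ⟨x, hx, h⟩
    exact KApproval.mul_pow_le_card_of_le_prob <|
      KApproval.one_sub_le_prob_empiricalScore_lt hε hδ hδ1 hx₀ (Nat.zero_lt_of_lt (winner x₀ hx₀))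
        gap ((div_le_iff₀ (by positivity)).1 hℓ)
  · push Not at hw
    rw [Nat.card_congr (Equiv.subtypeUnivEquiv fun _ x hx ↦ absurd (hw x) hx)]
    simpa using mul_le_of_le_one_left (by positivity : (0 : ℝ) ≤ (n : ℝ) ^ ℓ) (by linarith)
end

section
/- Consider an election with n votes (linear orders over the candidate set) under the maximin voting rule, and suppose its margin of victory is at least εn with winner w. Then for every candidate x ≠ w, s(w) − s(x) ≥ εn, where s(·) denotes the maximin score. -/
/-- Pairwise margin D(x,y): number of votes preferring x to y minus the number
preferring y to x. A vote is a permutation of `Fin m` (candidate `c` is ranked at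
position `v c`, position `0` being the top, so `v x < v y` means x is preferred). -/
noncomputable def pairMargin {m n : ℕ} (V : Fin n → Equiv.Perm (Fin m))
    (x y : Fin m) : ℝ :=
  (Nat.card {i : Fin n // (V i) x < (V i) y} : ℝ)
    - (Nat.card {i : Fin n // (V i) y < (V i) x} : ℝ)

/-- Maximin score of a candidate x: min over y ≠ x of D(x,y). -/
noncomputable def maximinScore {m n : ℕ} (V : Fin n → Equiv.Perm (Fin m))
    (x : Fin m) : ℝ :=
  ⨅ y : {y : Fin m // y ≠ x}, pairMargin V x (y : Fin m)

/-!
For `x ≠ y` every vote counts for exactly one of `x`, `y`, so `D(x,y) = 2 N(x,y) - n`. Write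
`s(w) = 2a - n` with `a = N(w,y)` and `s(x) = 2b - n` with `b = N(x,z)`, where `b ≤ a`. Among the
`a` votes preferring `w` to `y`, replace `a - b` by a vote with `x` on top and `w` at the bottom.
Then `N(w,y)` drops to `b` while no `N(x,u)` decreases, so `w` no longer beats `x`. This takes
`a - b = (s(w) - s(x)) / 2` replacements, which gives the bound with an extra factor `2`.
-/

open Finset

section Votes

variable {ι α : Type*}

theorem natCard_piecewise_ne_le (T : Finset ι) [DecidablePred (· ∈ T)] (f g : ι → α) :
    Nat.card {i : ι // T.piecewise f g i ≠ g i} ≤ #T := by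
  have hsub : {i | T.piecewise f g i ≠ g i} ⊆ (T : Set ι) := fun i hi => by
    by_contra hiT
    exact hi (T.piecewise_eq_of_notMem f g hiT)
  exact (Nat.card_mono T.finite_toSet hsub).trans_eq (by simp)

theorem exists_perm_forall_lt_forall_lt [PartialOrder α] [BoundedOrder α] {x w : α} (hxw : x ≠ w) :
    ∃ p : Equiv.Perm α, (∀ y, y ≠ x → p x < p y) ∧ ∀ y, y ≠ w → p y < p w := by
  have : Nontrivial α := ⟨x, w, hxw⟩
  obtain ⟨p, hpx, hpw⟩ := MulAction.is_two_pretransitive_iff.mp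
    (Equiv.Perm.isMultiplyPretransitive α 2) hxw (bot_ne_top (α := α))
  rw [Equiv.Perm.smul_def] at hpx hpw
  refine ⟨p, fun y hy => ?_, fun y hy => ?_⟩
  · rw [hpx, bot_lt_iff_ne_bot, ← hpx]
    exact p.injective.ne hy
  · rw [hpw, lt_top_iff_ne_top, ← hpw]
    exact p.injective.ne hy

variable [Fintype ι] [LinearOrder α]

/-- The voters of the profile `V` who prefer `x` to `y`; the number `N(x,y)` is its cardinality. -/
def supporters (V : ι → Equiv.Perm α) (x y : α) : Finset ι :=
  {i | V i x < V i y}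

theorem mem_supporters {V : ι → Equiv.Perm α} {x y : α} {i : ι} :
    i ∈ supporters V x y ↔ V i x < V i y := by
  simp [supporters]

variable [DecidableEq ι]

theorem compl_supporters (V : ι → Equiv.Perm α) {x y : α} (hxy : x ≠ y) :
    (supporters V x y)ᶜ = supporters V y x := by
  ext i
  rw [mem_compl, mem_supporters, mem_supporters, not_lt]
  exact ((V i).injective.ne hxy.symm).le_iff_lt

theorem supporters_piecewise_of_lt (V : ι → Equiv.Perm α) (T : Finset ι) {p : Equiv.Perm α}
    {x y : α} (hp : p x < p y) :
    supporters (T.piecewise (fun _ => p) V) x y = supporters V x y ∪ T := by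
  ext i
  by_cases hi : i ∈ T <;> simp [mem_supporters, hi, hp]

theorem supporters_piecewise_of_le (V : ι → Equiv.Perm α) (T : Finset ι) {p : Equiv.Perm α}
    {x y : α} (hp : p y ≤ p x) :
    supporters (T.piecewise (fun _ => p) V) x y = supporters V x y \ T := by
  ext i
  by_cases hi : i ∈ T <;> simp [mem_supporters, hi, hp]

end Votes

section Maximin

variable {m n : ℕ}

theorem pairMargin_eq_two_mul_card_supporters_sub (V : Fin n → Equiv.Perm (Fin m)) {x y : Fin m}
    (hxy : x ≠ y) : pairMargin V x y = 2 * #(supporters V x y) - n := by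
  have hN (a b : Fin m) : Nat.card {i : Fin n // V i a < V i b} = #(supporters V a b) := by
    simp [supporters, Fintype.card_subtype]
  have hsum : (#(supporters V x y) + #(supporters V y x) : ℝ) = n := by
    rw [← compl_supporters V hxy]
    exact_mod_cast (card_add_card_compl _).trans (Fintype.card_fin n)
  rw [pairMargin, hN, hN]
  linarith

theorem maximinScore_le_two_mul_card_supporters_sub (V : Fin n → Equiv.Perm (Fin m))
    {x y : Fin m} (hyx : y ≠ x) :
    maximinScore V x ≤ 2 * #(supporters V x y) - n := by
  rw [← pairMargin_eq_two_mul_card_supporters_sub V hyx.symm]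
  exact ciInf_le (Set.finite_range _).bddBelow (⟨y, hyx⟩ : {y : Fin m // y ≠ x})

theorem exists_maximinScore_eq_two_mul_card_supporters_sub [Nontrivial (Fin m)]
    (V : Fin n → Equiv.Perm (Fin m)) (x : Fin m) :
    ∃ y, y ≠ x ∧ maximinScore V x = 2 * #(supporters V x y) - n := by
  have : Nonempty {y : Fin m // y ≠ x} := nonempty_subtype.mpr (exists_ne x)
  obtain ⟨⟨y, hyx⟩, hy⟩ := exists_eq_ciInf_of_finite
    (f := fun y : {y : Fin m // y ≠ x} => pairMargin V x y)
  exact ⟨y, hyx, hy.symm.trans (pairMargin_eq_two_mul_card_supporters_sub V hyx.symm)⟩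

theorem maximinScore_le_maximinScore_piecewise (V : Fin n → Equiv.Perm (Fin m))
    (T : Finset (Fin n)) {p : Equiv.Perm (Fin m)} {x : Fin m} (hp : ∀ y, y ≠ x → p x < p y) :
    maximinScore V x ≤ maximinScore (T.piecewise (fun _ => p) V) x := by
  refine ciInf_mono (Set.finite_range _).bddBelow fun ⟨y, hyx⟩ => ?_
  rw [pairMargin_eq_two_mul_card_supporters_sub _ hyx.symm,
    pairMargin_eq_two_mul_card_supporters_sub _ hyx.symm,
    supporters_piecewise_of_lt V T (hp y hyx)]
  gcongr
  exact subset_union_left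

theorem exists_profile_maximinScore_le (V : Fin n → Equiv.Perm (Fin m)) {x w : Fin m}
    (hxw : x ≠ w) (hle : maximinScore V x ≤ maximinScore V w) :
    ∃ V' : Fin n → Equiv.Perm (Fin m), maximinScore V' w ≤ maximinScore V' x ∧
      2 * (Nat.card {i : Fin n // V' i ≠ V i} : ℝ) ≤ maximinScore V w - maximinScore V x := by
  have : Nontrivial (Fin m) := ⟨x, w, hxw⟩
  have : NeZero m := ⟨x.pos.ne'⟩
  obtain ⟨p, hpx, hpw⟩ := exists_perm_forall_lt_forall_lt hxw
  obtain ⟨y, hyw, hwy⟩ := exists_maximinScore_eq_two_mul_card_supporters_sub V w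
  obtain ⟨z, -, hxz⟩ := exists_maximinScore_eq_two_mul_card_supporters_sub V x
  have hba : #(supporters V x z) ≤ #(supporters V w y) := by
    rw [hxz, hwy] at hle
    exact_mod_cast (by linarith : (#(supporters V x z) : ℝ) ≤ #(supporters V w y))
  obtain ⟨T, hT, hTcard⟩ := exists_subset_card_eq
    (Nat.sub_le #(supporters V w y) #(supporters V x z))
  refine ⟨T.piecewise (fun _ => p) V, ?_, ?_⟩
  · calc maximinScore (T.piecewise (fun _ => p) V) w
        ≤ 2 * #(supporters V w y \ T) - n := by
          rw [← supporters_piecewise_of_le V T (hpw y hyw).le]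
          exact maximinScore_le_two_mul_card_supporters_sub _ hyw
      _ = maximinScore V x := by
          rw [card_sdiff_of_subset hT, hTcard, Nat.sub_sub_self hba, hxz]
      _ ≤ maximinScore (T.piecewise (fun _ => p) V) x :=
          maximinScore_le_maximinScore_piecewise V T hpx
  · calc 2 * (Nat.card {i : Fin n // T.piecewise (fun _ => p) V i ≠ V i} : ℝ)
        ≤ 2 * #T := by gcongr; exact natCard_piecewise_ne_le T _ V
      _ = maximinScore V w - maximinScore V x := by
          rw [hTcard, Nat.cast_sub hba, hwy, hxz]
          ring

end Maximin

theorem maximin_mov_score_gap_general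
    (m n : ℕ) (ε : ℝ) (V : Fin n → Equiv.Perm (Fin m)) (w : Fin m)
    (hw : ∀ x : Fin m, x ≠ w → maximinScore V x ≤ maximinScore V w)
    (hMOV : ∀ V' : Fin n → Equiv.Perm (Fin m),
      (∃ x : Fin m, x ≠ w ∧ maximinScore V' w ≤ maximinScore V' x) →
      ε * n ≤ (Nat.card {i : Fin n // V' i ≠ V i} : ℝ)) :
    ∀ x : Fin m, x ≠ w → 2 * (ε * n) ≤ maximinScore V w - maximinScore V x := by
  intro x hx
  obtain ⟨V', hV', hcard⟩ := exists_profile_maximinScore_le V hx (hw x hx)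
  linarith [hMOV V' ⟨x, hx, hV'⟩]

/-- If a maximin election with n votes has margin of victory at least εn and
(unique) winner w, then s(w) - s(x) ≥ εn for every candidate x ≠ w, where s is the
maximin score. The margin of victory condition says: any profile in which w is no
longer the unique maximin winner differs from V in at least εn votes. -/
theorem maximin_mov_score_gap
    (m n : ℕ) (ε : ℝ) (V : Fin n → Equiv.Perm (Fin m)) (w : Fin m)
    (hw : ∀ x : Fin m, x ≠ w → maximinScore V x < maximinScore V w)
    (hMOV : ∀ V' : Fin n → Equiv.Perm (Fin m),
      (∃ x : Fin m, x ≠ w ∧ maximinScore V' w ≤ maximinScore V' x) →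
      ε * n ≤ (Nat.card {i : Fin n // V' i ≠ V i} : ℝ)) :
    ∀ x : Fin m, x ≠ w → ε * n ≤ maximinScore V w - maximinScore V x := by
  intro x hx
  linarith [hw x hx, maximin_mov_score_gap_general m n ε V w (fun y hy => (hw y hy).le) hMOV x hx]
end
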